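/- A Young tower consists of the following data. $(\Delta_0,m_0)$ is a finite measure space; $\{\Lambda_i\}_{i\in I}$ ($I\subseteq\mathbb N$) are pairwise disjoint measurable subsets of $\Delta_0$ with $m_0(\Lambda_i)>0$ and $m_0(\Delta_0\setminus\bigcup_i\Lambda_i)=0$; $R_i\ge 1$ are integers with $\gcd\{R_i\}=1$, and $R:\Delta_0\to\{1,2,\dots\}$ is a measurable function with $R=R_i$ on $\Lambda_i$; $F^R:\Delta_0\to\Delta_0$ is a measurable map sending each $\Lambda_i$ bijectively onto $\Delta_0$; and the partition generates, i.e. the sets $(F^R)^{-k}(\Lambda_i)$ ($k\ge 0$, $i\in I$) generate the $\sigma$-algebra of $\Delta_0$ modulo $m_0$-null sets. The separation time $s(x,y)\in\mathbb N_0\cup\{\infty\}$ of $x,y\in\Delta_0$ is the least $n\ge 0$ such that $(F^R)^n(x)$ and $(F^R)^n(y)$ do not lie in a common $\Lambda_i$. The map $F^R$ has a measurable Jacobian $JF^R$, positive on each $\Lambda_i$, with $m_0(F^R(A))=\int_A JF^R\,dm_0$ for every measurable $A$ contained in a single $\Lambda_i$, and there are $C_F>0$ and $0<\beta<1$ with $|\log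 (JF^R(x)/JF^R(y))|\le C_F\,\beta^{s(F^R(x),F^R(y))}$ for all $x,y$ in the same $\Lambda_i$. The tower is $\Delta=\{(x,l): x\in\Delta_0,\ 0\le l<R(x)\}$, with partition elements $\Delta_{l,i}=\{(x,l)\in\Delta: x\in\Lambda_i\}$ and tower map $F(x,l)=(x,l+1)$ if $l+1<R(x)$, $F(x,l)=(F^R(x),0)$ if $l+1=R(x)$; $m$ is the measure on $\Delta$ which on the level $\{(x,l)\in\Delta\}$ is the copy of $m_0$ restricted to $\{R>l\}$. The separation time is extended to $\Delta$ by $s((x,l),(y,l'))=s(x,y)$ if the two points lie in the same $\Delta_{l,i}$, and $s=0$ otherwise. For $\theta>0$ and $D>0$ say that $\varphi:\Delta\to\mathbb R$ belongs to $\mathcal G_\theta^+$ with constant $D$ if $$|\varphi(x)-\varphi(y)|\le \frac{D}{\max\{s(x,y),1\}^\theta}\quad\text{for all }x,y\in\Delta,$$ and on each $\Delta_{l,i}$ either $\varphi\equiv 0$, or $\varphi>0$ and $\big|\frac{\varphi(x)}{\varphi(y)}-1\big|\le \frac{D}{\max\{s(x,y),1\}^\theta}$ for all $x,y\in\Delta_{l,i}$.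 (Here $\beta^\infty=0$ and $D/\infty^\theta=0$.) Let $|\cdot|$ denote the total variation norm of a signed measure. Theorem. For every Young tower there exist $\theta_0>1$ and, for each $\theta\ge\theta_0$, a constant $\zeta_0=\zeta_0(\theta)>1$ with the following property. Let $\theta\ge\theta_0$, $1<\zeta<\zeta_0$ and $C>0$, and suppose that $m_0\{R>n\}\le C n^{-\zeta}$ for all $n\ge 1$. Then there is a unique $F$-invariant probability measure $\nu$ on $\Delta$ equivalent to $m$, and for every $D>0$ there is $C'>0$ such that, for every probability measure $\lambda$ on $\Delta$ whose density $\varphi=d\lambda/dm$ belongs to $\mathcal G_\theta^+$ with constant $D$, $$|F^n_*\lambda-\nu|\le \frac{C'}{n^{\zeta-1}}\qquad\text{for all } n\ge 1 .$$ Thus, for a given tower and given $\theta,\zeta,C$, the constant $C'$ depends on $\lambda$ only through $D$. -/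

import Mathlib

noncomputable section

open MeasureTheory

/-- `β ^ s` for an extended natural number `s`, with `β ^ ∞ = 0`. -/
def epow (β : ℝ) (s : ℕ∞) : ℝ := if s = ⊤ then 0 else β ^ s.toNat

/-- `1 / max {s, 1} ^ θ` for an extended natural number `s`, with value `0` for `s = ∞`. -/
def gpow (θ : ℝ) (s : ℕ∞) : ℝ := if s = ⊤ then 0 else 1 / (max (s.toNat : ℝ) 1) ^ θ

/-- The separation time of `x` and `y`: the least `n` for which the `n`-th iterates of the return
map do not lie in a common partition element (`∞` if there is no such `n`). -/
def sepTime {Δ₀ : Type*} (I : Set ℕ) (Λ : ℕ → Set Δ₀) (FR : Δ₀ → Δ₀) (x y : Δ₀) : ℕ∞ :=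
  ⨅ n ∈ {n : ℕ | ¬ ∃ i ∈ I, FR^[n] x ∈ Λ i ∧ FR^[n] y ∈ Λ i}, (n : ℕ∞)

/-- The data of a Young tower over the base `Δ₀`. -/
structure YoungTower (Δ₀ : Type*) [MeasurableSpace Δ₀] where
  /-- the reference measure on the base -/
  m₀ : Measure Δ₀
  m₀_finite : IsFiniteMeasure m₀
  /-- the index set of the partition `{Λ i}` -/
  I : Set ℕ
  Λ : ℕ → Set Δ₀
  Λ_meas : ∀ i ∈ I, MeasurableSet (Λ i)
  Λ_disj : I.PairwiseDisjoint Λ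
  Λ_pos : ∀ i ∈ I, 0 < m₀ (Λ i)
  Λ_full : m₀ (Set.univ \ ⋃ i ∈ I, Λ i) = 0
  /-- the return times `R_i` -/
  Ret : ℕ → ℕ
  Ret_pos : ∀ i ∈ I, 1 ≤ Ret i
  /-- `gcd {R_i} = 1` -/
  Ret_gcd : ∀ d : ℕ, (∀ i ∈ I, d ∣ Ret i) → d = 1
  /-- the return time function -/
  R : Δ₀ → ℕ
  R_meas : Measurable R
  R_pos : ∀ x, 0 < R x
  R_eq : ∀ i ∈ I, ∀ x ∈ Λ i, R x = Ret i
  /-- the return map `F^R` -/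
  FR : Δ₀ → Δ₀
  FR_meas : Measurable FR
  FR_bij : ∀ i ∈ I, Set.BijOn FR (Λ i) Set.univ
  /-- the partition generates: modulo `m₀`, the sets `(F^R)^{-k}(Λ i)` generate the `σ`-algebra -/
  generating : ∀ A : Set Δ₀, MeasurableSet A → ∃ B : Set Δ₀,
    MeasurableSet[MeasurableSpace.generateFrom
      {S : Set Δ₀ | ∃ k : ℕ, ∃ i ∈ I, S = FR^[k] ⁻¹' Λ i}] B ∧ A =ᵐ[m₀] B
  /-- the Jacobian of `F^R` -/
  JFR : Δ₀ → ℝ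
  JFR_meas : Measurable JFR
  JFR_pos : ∀ i ∈ I, ∀ x ∈ Λ i, 0 < JFR x
  JFR_jac : ∀ i ∈ I, ∀ A : Set Δ₀, A ⊆ Λ i → MeasurableSet A →
    m₀ (FR '' A) = ∫⁻ x in A, ENNReal.ofReal (JFR x) ∂m₀
  CF : ℝ
  β : ℝ
  CF_pos : 0 < CF
  β_pos : 0 < β
  β_lt_one : β < 1
  distortion : ∀ i ∈ I, ∀ x ∈ Λ i, ∀ y ∈ Λ i,
    |Real.log (JFR x / JFR y)| ≤ CF * epow β (sepTime I Λ FR (FR x) (FR y))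

namespace YoungTower

variable {Δ₀ : Type*} [MeasurableSpace Δ₀] (T : YoungTower Δ₀)

/-- The tower `Δ = {(x, l) : x ∈ Δ₀, 0 ≤ l < R x}`. -/
abbrev Tower : Type _ := {p : Δ₀ × ℕ // p.2 < T.R p.1}

/-- The tower map `F`. -/
def towerMap (p : T.Tower) : T.Tower :=
  if h : p.1.2 + 1 < T.R p.1.1 then ⟨(p.1.1, p.1.2 + 1), h⟩
  else ⟨(T.FR p.1.1, 0), T.R_pos _⟩

/-- The reference measure `m` on the tower: on the `l`-th level it is the copy of `m₀`
restricted to `{R > l}`. -/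
def towerMeasure : Measure T.Tower :=
  (Measure.sum fun l : ℕ =>
    (T.m₀.restrict {x | l < T.R x}).map fun x => (x, l)).comap Subtype.val

/-- The partition element `Δ_{l,i}` of the tower. -/
def pieceSet (l i : ℕ) : Set T.Tower := {p | p.1.2 = l ∧ p.1.1 ∈ T.Λ i}

open Classical in
/-- The separation time on the tower: that of the base points if the two points lie in the same
`Δ_{l,i}`, and `0` otherwise. -/
def sepTower (p q : T.Tower) : ℕ∞ :=
  if ∃ l : ℕ, ∃ i ∈ T.I, p ∈ T.pieceSet l i ∧ q ∈ T.pieceSet l i then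
    sepTime T.I T.Λ T.FR p.1.1 q.1.1
  else 0

/-- `φ` belongs to `𝒢_θ` with constant `D`. -/
def MemG (θ D : ℝ) (φ : T.Tower → ℝ) : Prop :=
  ∀ p q : T.Tower, |φ p - φ q| ≤ D * gpow θ (T.sepTower p q)

/-- `φ` belongs to `𝒢_θ⁺` with constant `D`: it belongs to `𝒢_θ` with constant `D`, and on each
`Δ_{l,i}` either `φ ≡ 0`, or `φ > 0` and `|φ p / φ q - 1| ≤ D / max {s(p,q), 1} ^ θ`. -/
def MemGPlus (θ D : ℝ) (φ : T.Tower → ℝ) : Prop :=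
  T.MemG θ D φ ∧ ∀ l : ℕ, ∀ i ∈ T.I,
    (∀ p ∈ T.pieceSet l i, φ p = 0) ∨
    ((∀ p ∈ T.pieceSet l i, 0 < φ p) ∧
      ∀ p ∈ T.pieceSet l i, ∀ q ∈ T.pieceSet l i,
        |φ p / φ q - 1| ≤ D * gpow θ (T.sepTower p q))

/-- `ν` is `F`-invariant and equivalent to `m`. -/
def IsInvariantEquiv (ν : Measure T.Tower) : Prop :=
  MeasurePreserving T.towerMap ν ν ∧ ν ≪ T.towerMeasure ∧ T.towerMeasure ≪ ν

end YoungTower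

/-- The total variation norm `|μ - ν|` of the difference of two finite measures. -/
def tvDist {X : Type*} [MeasurableSpace X] (μ ν : Measure X)
    [IsFiniteMeasure μ] [IsFiniteMeasure ν] : ℝ :=
  ((μ.toSignedMeasure - ν.toSignedMeasure).totalVariation Set.univ).toReal

end

open MeasureTheory

open MeasureTheory
open scoped ENNReal

noncomputable section

namespace YoungTower

variable {Δ₀ : Type*} [MeasurableSpace Δ₀] (T : YoungTower Δ₀)

/-- The embedding of the base as the ground level of the tower. -/
def base (x : Δ₀) : T.Tower := ⟨(x, 0), T.R_pos x⟩

/-- The time at which a point of the tower next arrives at the ground level. -/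
def hit (p : T.Tower) : ℕ := T.R p.1.1 - p.1.2

/-- The point of the base at which a point of the tower next arrives. -/
def land (p : T.Tower) : Δ₀ := T.FR p.1.1

instance : IsFiniteMeasure T.m₀ := T.m₀_finite

theorem measurable_base : Measurable T.base :=
  Measurable.subtype_mk (measurable_id.prodMk measurable_const)

theorem measurable_point : Measurable fun p : T.Tower => p.1.1 :=
  measurable_fst.comp measurable_subtype_coe

theorem measurable_level : Measurable fun p : T.Tower => p.1.2 :=
  measurable_snd.comp measurable_subtype_coe

theorem measurable_land : Measurable T.land := T.FR_meas.comp T.measurable_point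

theorem measurable_hit : Measurable T.hit :=
  (T.R_meas.comp T.measurable_point).sub T.measurable_level

theorem measurableSet_hit_eq (t : ℕ) : MeasurableSet {p : T.Tower | T.hit p = t} :=
  measurableSet_eq_fun T.measurable_hit measurable_const

theorem measurableSet_lt_hit (t : ℕ) : MeasurableSet {p : T.Tower | t < T.hit p} :=
  measurableSet_lt measurable_const T.measurable_hit

theorem hit_pos (p : T.Tower) : 0 < T.hit p := Nat.sub_pos_of_lt p.2

theorem towerMap_val (p : T.Tower) : (T.towerMap p).1 =
    if p.1.2 + 1 < T.R p.1.1 then (p.1.1, p.1.2 + 1) else (T.FR p.1.1, 0) := by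
  unfold towerMap
  split_ifs <;> rfl

theorem measurable_towerMap : Measurable T.towerMap := by
  have : Measurable fun p : T.Tower => (T.towerMap p).1 := by
    simp_rw [towerMap_val]
    refine Measurable.ite ?_ ?_ ?_
    · exact measurableSet_lt (T.measurable_level.add_const 1) (T.R_meas.comp T.measurable_point)
    · exact T.measurable_point.prodMk (T.measurable_level.add_const 1)
    · exact T.measurable_land.prodMk measurable_const
  exact Measurable.subtype_mk this

theorem measurable_iterate (n : ℕ) : Measurable T.towerMap^[n] :=
  T.measurable_towerMap.iterate n

theorem towerMap_of_hit_eq_one {p : T.Tower} (h : T.hit p = 1) :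
    T.towerMap p = T.base (T.land p) := by
  apply Subtype.ext
  rw [towerMap_val, if_neg]
  · rfl
  · unfold hit at h
    omega

theorem towerMap_of_one_lt_hit {p : T.Tower} (h : 1 < T.hit p) :
    (T.towerMap p).1 = (p.1.1, p.1.2 + 1) := by
  rw [towerMap_val, if_pos]
  unfold hit at h
  omega

theorem iterate_of_lt_hit {n : ℕ} : ∀ {p : T.Tower}, n < T.hit p →
    (T.towerMap^[n] p).1 = (p.1.1, p.1.2 + n) := by
  induction n with
  | zero => intro p _; rfl
  | succ n ih =>
    intro p h
    have h1 := T.towerMap_of_one_lt_hit (p := p) (by omega)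
    have h2 : n < T.hit (T.towerMap p) := by
      unfold hit at h ⊢
      rw [h1]
      dsimp only
      omega
    rw [Function.iterate_succ_apply, ih h2, h1]
    simp only [Prod.mk.injEq, true_and]
    omega

theorem iterate_hit {t : ℕ} {p : T.Tower} (h : T.hit p = t) :
    T.towerMap^[t] p = T.base (T.land p) := by
  obtain ⟨n, rfl⟩ : ∃ n, t = n + 1 := ⟨t - 1, by have := T.hit_pos p; omega⟩
  have h1 := T.iterate_of_lt_hit (n := n) (p := p) (by omega)
  rw [Function.iterate_succ_apply', T.towerMap_of_hit_eq_one]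
  · unfold land
    rw [h1]
  · unfold hit at h ⊢
    rw [h1]
    dsimp only
    omega

theorem measurableSet_region : MeasurableSet {p : Δ₀ × ℕ | p.2 < T.R p.1} :=
  measurableSet_lt measurable_snd (T.R_meas.comp measurable_fst)

theorem measurableSet_lt_R (l : ℕ) : MeasurableSet {x | l < T.R x} :=
  measurableSet_lt measurable_const T.R_meas

/-- The part of a subset of the tower on the level `l`, as a subset of the base. -/
def slice (A : Set T.Tower) (l : ℕ) : Set Δ₀ := {x | ∃ h : l < T.R x, (⟨(x, l), h⟩ : T.Tower) ∈ A}

theorem slice_eq (A : Set T.Tower) (l : ℕ) :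
    T.slice A l = {x | l < T.R x} ∩ (fun x => (x, l)) ⁻¹' (Subtype.val '' A) := by
  ext x
  simp only [slice, Set.mem_ofPred_eq, Set.mem_inter_iff, Set.mem_preimage, Set.mem_image,
    Subtype.exists, exists_and_right, exists_eq_right]
  exact ⟨fun ⟨h, h'⟩ => ⟨h, h, h'⟩, fun ⟨_, h, h'⟩ => ⟨h, h'⟩⟩

theorem measurableSet_slice {A : Set T.Tower} (hA : MeasurableSet A) (l : ℕ) :
    MeasurableSet (T.slice A l) := by
  rw [slice_eq]
  refine (T.measurableSet_lt_R l).inter ?_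
  have : Measurable fun x : Δ₀ => (x, l) := measurable_id.prodMk measurable_const
  exact this ((MeasurableEmbedding.subtype_coe T.measurableSet_region).measurableSet_image.2 hA)

theorem towerMeasure_apply {A : Set T.Tower} (hA : MeasurableSet A) :
    T.towerMeasure A = ∑' l, T.m₀ (T.slice A l) := by
  have hemb : MeasurableEmbedding (Subtype.val : T.Tower → Δ₀ × ℕ) :=
    MeasurableEmbedding.subtype_coe T.measurableSet_region
  have hm := hemb.measurableSet_image.2 hA
  unfold towerMeasure
  rw [hemb.comap_apply, Measure.sum_apply _ hm]
  refine tsum_congr fun l => ?_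
  have hl : Measurable fun x : Δ₀ => (x, l) := measurable_id.prodMk measurable_const
  rw [Measure.map_apply hl hm, Measure.restrict_apply (hl hm), slice_eq, Set.inter_comm]

theorem map_base_le : T.m₀.map T.base ≤ T.towerMeasure := by
  refine Measure.le_iff.2 fun A hA => ?_
  rw [Measure.map_apply T.measurable_base hA, T.towerMeasure_apply hA]
  refine le_trans (le_of_eq ?_) (ENNReal.le_tsum 0)
  congr 1
  ext x
  exact ⟨fun h => ⟨T.R_pos x, h⟩, fun ⟨_, h⟩ => h⟩

theorem le_sepTime_iff {x y : Δ₀} {k : ℕ} : (k : ℕ∞) ≤ sepTime T.I T.Λ T.FR x y ↔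
    ∀ n < k, ∃ i ∈ T.I, T.FR^[n] x ∈ T.Λ i ∧ T.FR^[n] y ∈ T.Λ i := by
  unfold sepTime
  simp only [le_iInf_iff, Nat.cast_le, Set.mem_ofPred_eq]
  refine forall_congr' fun n => ⟨fun h hn => ?_, fun h hn => ?_⟩
  · by_contra h'
    exact absurd (h h') (by omega)
  · by_contra h'
    exact hn (h (by omega))

theorem le_sepTower_iff {p q : T.Tower} {k : ℕ} (hk : 1 ≤ k) :
    (k : ℕ∞) ≤ T.sepTower p q ↔
      p.1.2 = q.1.2 ∧ (k : ℕ∞) ≤ sepTime T.I T.Λ T.FR p.1.1 q.1.1 := by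
  unfold sepTower
  split_ifs with h
  · obtain ⟨l, i, -, hp, hq⟩ := h
    exact ⟨fun h => ⟨hp.1.trans hq.1.symm, h⟩, fun h => h.2⟩
  · refine ⟨fun h' => ?_, fun h' => ?_⟩
    · have : k ≤ 0 := by exact_mod_cast h'
      omega
    · obtain ⟨i, hi, hp, hq⟩ := T.le_sepTime_iff.1 h'.2 0 (by omega)
      exact absurd ⟨q.1.2, i, hi, ⟨h'.1, hp⟩, ⟨rfl, hq⟩⟩ h

theorem succ_le_sepTime {x y : Δ₀} {k i : ℕ} (hi : i ∈ T.I) (hx : x ∈ T.Λ i) (hy : y ∈ T.Λ i)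
    (h : (k : ℕ∞) ≤ sepTime T.I T.Λ T.FR (T.FR x) (T.FR y)) :
    ((k + 1 : ℕ) : ℕ∞) ≤ sepTime T.I T.Λ T.FR x y := by
  rw [le_sepTime_iff] at h ⊢
  rintro (_ | n) hn
  · exact ⟨i, hi, hx, hy⟩
  · simpa using h n (by omega)

theorem epow_le {s : ℕ∞} {k : ℕ} (h : (k : ℕ∞) ≤ s) : epow T.β s ≤ T.β ^ k := by
  unfold epow
  split_ifs with hs
  · exact pow_nonneg T.β_pos.le k
  · refine pow_le_pow_of_le_one T.β_pos.le T.β_lt_one.le ?_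
    lift s to ℕ using hs
    exact_mod_cast h

theorem exists_mem_I : ∃ i, i ∈ T.I := by
  by_contra! h
  exact absurd (T.Ret_gcd 2 fun i hi => absurd hi (h i)) (by norm_num)

theorem m₀_univ_pos : 0 < T.m₀ Set.univ := by
  obtain ⟨i, hi⟩ := T.exists_mem_I
  exact (T.Λ_pos i hi).trans_le (measure_mono (Set.subset_univ _))

theorem m₀_univ_ne_zero : T.m₀ Set.univ ≠ 0 := T.m₀_univ_pos.ne'

/-- The distortion factor `exp (K β ^ k)`. -/
def dist (K : ℝ) (k : ℕ) : ℝ≥0∞ := ENNReal.ofReal (Real.exp (K * T.β ^ k))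

theorem dist_ne_top (K : ℝ) (k : ℕ) : T.dist K k ≠ ∞ := ENNReal.ofReal_ne_top

theorem dist_ne_zero (K : ℝ) (k : ℕ) : T.dist K k ≠ 0 := by
  simp [dist, Real.exp_pos]

theorem one_le_dist {K : ℝ} (hK : 0 ≤ K) (k : ℕ) : 1 ≤ T.dist K k := by
  rw [dist, ← ENNReal.ofReal_one]
  exact ENNReal.ofReal_le_ofReal (Real.one_le_exp (mul_nonneg hK (pow_nonneg T.β_pos.le k)))

theorem dist_mono {K K' : ℝ} (h : K ≤ K') (k : ℕ) : T.dist K k ≤ T.dist K' k :=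
  ENNReal.ofReal_le_ofReal (Real.exp_le_exp.2
    (mul_le_mul_of_nonneg_right h (pow_nonneg T.β_pos.le k)))

theorem dist_mul_dist (K K' : ℝ) (k : ℕ) :
    T.dist K (k + 1) * T.dist K' k = T.dist (K * T.β + K') k := by
  rw [dist, dist, dist, ← ENNReal.ofReal_mul (Real.exp_pos _).le, ← Real.exp_add]
  ring_nf

theorem jacobian_le {i k : ℕ} (hi : i ∈ T.I) {x y : Δ₀} (hx : x ∈ T.Λ i) (hy : y ∈ T.Λ i)
    (h : (k : ℕ∞) ≤ sepTime T.I T.Λ T.FR (T.FR x) (T.FR y)) :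
    ENNReal.ofReal (T.JFR x) ≤ T.dist T.CF k * ENNReal.ofReal (T.JFR y) := by
  have hJx := T.JFR_pos i hi x hx
  have hJy := T.JFR_pos i hi y hy
  rw [dist, ← ENNReal.ofReal_mul (Real.exp_pos _).le]
  refine ENNReal.ofReal_le_ofReal ?_
  rw [← div_le_iff₀ hJy, ← Real.log_le_iff_le_exp (div_pos hJx hJy)]
  exact (le_abs_self _).trans ((T.distortion i hi x hx y hy).trans
    (mul_le_mul_of_nonneg_left (T.epow_le h) T.CF_pos.le))

theorem measure_eq_lintegral_branch {i : ℕ} (hi : i ∈ T.I) {A : Set Δ₀} (hA : MeasurableSet A) :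
    T.m₀ A = ∫⁻ x in T.Λ i ∩ T.FR ⁻¹' A, ENNReal.ofReal (T.JFR x) ∂T.m₀ := by
  rw [← T.JFR_jac i hi _ Set.inter_subset_left ((T.Λ_meas i hi).inter (T.FR_meas hA))]
  congr 1
  rw [Set.image_inter_preimage, (T.FR_bij i hi).image_eq, Set.univ_inter]

/-- Bounded distortion of the inverse branches, in terms of measures of sets. -/
theorem branch_distortion {i k : ℕ} (hi : i ∈ T.I) {A A' : Set Δ₀} (hA : MeasurableSet A)
    (hA' : MeasurableSet A')
    (h : ∀ x ∈ A, ∀ y ∈ A', (k : ℕ∞) ≤ sepTime T.I T.Λ T.FR x y) :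
    T.m₀ (T.Λ i ∩ T.FR ⁻¹' A) * T.m₀ A' ≤
      T.dist T.CF k * (T.m₀ (T.Λ i ∩ T.FR ⁻¹' A') * T.m₀ A) := by
  set P := T.Λ i ∩ T.FR ⁻¹' A with hP
  set P' := T.Λ i ∩ T.FR ⁻¹' A' with hP'
  have hPm : MeasurableSet P := (T.Λ_meas i hi).inter (T.FR_meas hA)
  have hPm' : MeasurableSet P' := (T.Λ_meas i hi).inter (T.FR_meas hA')
  have hJ : Measurable fun x => ENNReal.ofReal (T.JFR x) := T.JFR_meas.ennreal_ofReal
  have key : ∀ x ∈ P, T.m₀ A' ≤ T.dist T.CF k * (T.m₀ P' * ENNReal.ofReal (T.JFR x)) := by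
    intro x hx
    rw [T.measure_eq_lintegral_branch hi hA']
    calc ∫⁻ y in P', ENNReal.ofReal (T.JFR y) ∂T.m₀
        ≤ ∫⁻ y in P', T.dist T.CF k * ENNReal.ofReal (T.JFR x) ∂T.m₀ := by
          refine setLIntegral_mono' hPm' fun y hy => ?_
          refine T.jacobian_le hi hy.1 hx.1 ?_
          rw [le_sepTime_iff]
          intro n hn
          obtain ⟨j, hj, h1, h2⟩ := T.le_sepTime_iff.1 (h _ hx.2 _ hy.2) n hn
          exact ⟨j, hj, h2, h1⟩
      _ = _ := by rw [setLIntegral_const]; ring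
  calc T.m₀ P * T.m₀ A' = ∫⁻ x in P, T.m₀ A' ∂T.m₀ := by rw [setLIntegral_const, mul_comm]
    _ ≤ ∫⁻ x in P, T.dist T.CF k * (T.m₀ P' * ENNReal.ofReal (T.JFR x)) ∂T.m₀ :=
        setLIntegral_mono' hPm key
    _ = T.dist T.CF k * (T.m₀ P' * T.m₀ A) := by
        rw [lintegral_const_mul _ (hJ.const_mul _), lintegral_const_mul _ hJ,
          ← T.measure_eq_lintegral_branch hi hA]

theorem measure_eq_zero_of_branch {i : ℕ} (hi : i ∈ T.I) {A : Set Δ₀} (hA : MeasurableSet A)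
    (h : T.m₀ (T.Λ i ∩ T.FR ⁻¹' A) = 0) : T.m₀ A = 0 := by
  rw [T.measure_eq_lintegral_branch hi hA]
  exact setLIntegral_measure_zero _ _ h

end YoungTower

namespace YoungTower

variable {Δ₀ : Type*} [MeasurableSpace Δ₀] (T : YoungTower Δ₀)

/-- Regularity of a measure on the tower, at the scale of cylinders of length at least `j`:
the densities of two subsets of a common cylinder of length `k` differ at most by the
factor `exp (K β ^ k)`. -/
def TReg (K : ℝ) (j : ℕ) (μ : Measure T.Tower) : Prop :=
  ∀ k, j ≤ k → 1 ≤ k → ∀ A A', MeasurableSet A → MeasurableSet A' →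
    (∀ p ∈ A, ∀ q ∈ A', (k : ℕ∞) ≤ T.sepTower p q) →
      μ A * T.towerMeasure A' ≤ T.dist K k * (μ A' * T.towerMeasure A)

/-- Regularity of a measure on the base, at the scale of cylinders of length at least `j`. -/
def BReg (K : ℝ) (j : ℕ) (μ : Measure Δ₀) : Prop :=
  ∀ k, j ≤ k → ∀ A A', MeasurableSet A → MeasurableSet A' →
    (∀ x ∈ A, ∀ y ∈ A', (k : ℕ∞) ≤ sepTime T.I T.Λ T.FR x y) →
      μ A * T.m₀ A' ≤ T.dist K k * (μ A' * T.m₀ A)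

variable {T}

theorem TReg.sum {ι : Type*} {K : ℝ} {j : ℕ} {μ : ι → Measure T.Tower}
    (h : ∀ i, T.TReg K j (μ i)) : T.TReg K j (Measure.sum μ) := by
  intro k hj hk A A' hA hA' hs
  rw [Measure.sum_apply _ hA, Measure.sum_apply _ hA', ← ENNReal.tsum_mul_right,
    ← ENNReal.tsum_mul_right, ← ENNReal.tsum_mul_left]
  exact ENNReal.tsum_le_tsum fun i => h i k hj hk A A' hA hA' hs

theorem BReg.sum {ι : Type*} {K : ℝ} {j : ℕ} {μ : ι → Measure Δ₀}
    (h : ∀ i, T.BReg K j (μ i)) : T.BReg K j (Measure.sum μ) := by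
  intro k hj A A' hA hA' hs
  rw [Measure.sum_apply _ hA, Measure.sum_apply _ hA', ← ENNReal.tsum_mul_right,
    ← ENNReal.tsum_mul_right, ← ENNReal.tsum_mul_left]
  exact ENNReal.tsum_le_tsum fun i => h i k hj A A' hA hA' hs

theorem TReg.add {K : ℝ} {j : ℕ} {μ ν : Measure T.Tower} (h : T.TReg K j μ) (h' : T.TReg K j ν) :
    T.TReg K j (μ + ν) := by
  intro k hj hk A A' hA hA' hs
  rw [Measure.add_apply, Measure.add_apply, add_mul, add_mul, mul_add]
  exact add_le_add (h k hj hk A A' hA hA' hs) (h' k hj hk A A' hA hA' hs)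

theorem TReg.smul {K : ℝ} {j : ℕ} {μ : Measure T.Tower} (h : T.TReg K j μ) (c : ℝ≥0∞) :
    T.TReg K j (c • μ) := by
  intro k hj hk A A' hA hA' hs
  rw [Measure.smul_apply, Measure.smul_apply, smul_eq_mul, smul_eq_mul, mul_assoc, mul_assoc,
    mul_left_comm _ c]
  exact mul_le_mul_right (h k hj hk A A' hA hA' hs) c

theorem TReg.mono {K K' : ℝ} {j j' : ℕ} {μ : Measure T.Tower} (h : T.TReg K j μ) (hK : K ≤ K')
    (hj : j ≤ j') : T.TReg K' j' μ := fun k hk hk' A A' hA hA' hs =>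
  (h k (hj.trans hk) hk' A A' hA hA' hs).trans (mul_le_mul_left (T.dist_mono hK k) _)

theorem TReg.of_zero {K : ℝ} {μ : Measure T.Tower} (h : T.TReg K 0 μ) (j : ℕ) : T.TReg K j μ :=
  h.mono le_rfl (Nat.zero_le j)

variable (T)

theorem measurableSet_pieceSet (l : ℕ) {i : ℕ} (hi : i ∈ T.I) :
    MeasurableSet (T.pieceSet l i) :=
  (measurableSet_eq_fun T.measurable_level measurable_const).inter
    (T.measurable_point (T.Λ_meas i hi))

theorem pairwise_disjoint_pieceSet :
    Pairwise (Function.onFun Disjoint fun c : ℕ × T.I => T.pieceSet c.1 c.2) := by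
  rintro ⟨l, i⟩ ⟨l', i'⟩ hne
  refine Set.disjoint_left.2 fun p hp hq => hne ?_
  have h1 : l = l' := hp.1.symm.trans hq.1
  have h2 : i = i' := by
    by_contra h
    exact Set.disjoint_left.1 (T.Λ_disj i.2 i'.2 fun h' => h (Subtype.ext h')) hp.2 hq.2
  rw [h1, h2]

theorem towerMeasure_compl_pieces :
    T.towerMeasure (⋃ c : ℕ × T.I, T.pieceSet c.1 c.2)ᶜ = 0 := by
  have hm : MeasurableSet (⋃ c : ℕ × T.I, T.pieceSet c.1 c.2) :=
    MeasurableSet.iUnion fun c => T.measurableSet_pieceSet c.1 c.2.2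
  rw [T.towerMeasure_apply hm.compl, ENNReal.tsum_eq_zero]
  intro l
  refine measure_mono_null ?_ T.Λ_full
  rintro x ⟨h, hx⟩
  refine ⟨trivial, fun hx' => hx ?_⟩
  obtain ⟨i, hi, hxi⟩ := Set.mem_iUnion₂.1 hx'
  exact Set.mem_iUnion.2 ⟨(l, ⟨i, hi⟩), rfl, hxi⟩

theorem eq_sum_restrict_pieces {μ : Measure T.Tower} (h : μ ≪ T.towerMeasure) :
    μ = Measure.sum fun c : ℕ × T.I => μ.restrict (T.pieceSet c.1 c.2) := by
  rw [← Measure.restrict_iUnion T.pairwise_disjoint_pieceSet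
    fun c => T.measurableSet_pieceSet c.1 c.2.2]
  refine (Measure.restrict_eq_self_of_ae_mem ?_).symm
  exact h T.towerMeasure_compl_pieces

theorem slice_preimage_land {l i t : ℕ} (hi : i ∈ T.I) (hl : l < T.Ret i) (ht : T.Ret i - l = t)
    (A : Set Δ₀) (l' : ℕ) :
    T.slice (T.land ⁻¹' A ∩ ({p | T.hit p = t} ∩ T.pieceSet l i)) l' =
      if l' = l then T.Λ i ∩ T.FR ⁻¹' A else ∅ := by
  ext x
  split_ifs with h
  · subst h
    constructor
    · rintro ⟨_, h1, _, _, h3⟩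
      exact ⟨h3, h1⟩
    · rintro ⟨h1, h2⟩
      have hR := T.R_eq i hi x h1
      refine ⟨by omega, h2, ?_, rfl, h1⟩
      change T.R x - l' = t
      omega
  · refine ⟨?_, fun h => h.elim⟩
    rintro ⟨_, h1, _, h2, h3⟩
    exact h h2

theorem towerMeasure_preimage_land {l i t : ℕ} (hi : i ∈ T.I) (hl : l < T.Ret i)
    (ht : T.Ret i - l = t) {A : Set Δ₀} (hA : MeasurableSet A) :
    T.towerMeasure (T.land ⁻¹' A ∩ ({p | T.hit p = t} ∩ T.pieceSet l i)) =
      T.m₀ (T.Λ i ∩ T.FR ⁻¹' A) := by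
  rw [T.towerMeasure_apply ((T.measurable_land hA).inter
    ((T.measurableSet_hit_eq t).inter (T.measurableSet_pieceSet l hi)))]
  simp_rw [T.slice_preimage_land hi hl ht]
  rw [tsum_eq_single l fun l' h => by rw [if_neg h, measure_empty], if_pos rfl]

variable {T}

/-- The part of a regular measure which arrives at the base at time `t` gains regularity. -/
theorem TReg.map_land {K : ℝ} {j : ℕ} {μ : Measure T.Tower} (hac : μ ≪ T.towerMeasure)
    (h : T.TReg K (j + 1) μ) (t : ℕ) :
    T.BReg (K * T.β + T.CF) j ((μ.restrict {p | T.hit p = t}).map T.land) := by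
  have hsum : (μ.restrict {p | T.hit p = t}).map T.land = Measure.sum fun c : ℕ × T.I =>
      ((μ.restrict (T.pieceSet c.1 c.2)).restrict {p | T.hit p = t}).map T.land := by
    rw [← Measure.map_sum T.measurable_land.aemeasurable,
      ← Measure.restrict_sum _ (T.measurableSet_hit_eq t), ← T.eq_sum_restrict_pieces hac]
  rw [hsum]
  refine BReg.sum ?_
  rintro ⟨l, i, hi⟩ k hj A A' hA hA' hs
  dsimp only
  rw [Measure.restrict_restrict (T.measurableSet_hit_eq t), Measure.map_apply T.measurable_land hA,
    Measure.map_apply T.measurable_land hA', Measure.restrict_apply (T.measurable_land hA),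
    Measure.restrict_apply (T.measurable_land hA')]
  by_cases hl : l < T.Ret i ∧ T.Ret i - l = t
  · obtain ⟨hl, ht⟩ := hl
    have hQ := (T.measurableSet_hit_eq t).inter (T.measurableSet_pieceSet l hi)
    set P := T.land ⁻¹' A ∩ ({p | T.hit p = t} ∩ T.pieceSet l i) with hP
    set P' := T.land ⁻¹' A' ∩ ({p | T.hit p = t} ∩ T.pieceSet l i) with hP'
    have h1 : μ P * T.towerMeasure P' ≤ T.dist K (k + 1) * (μ P' * T.towerMeasure P) := by
      refine h (k + 1) (by omega) (by omega) P P' ((T.measurable_land hA).inter hQ)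
        ((T.measurable_land hA').inter hQ) fun p hp q hq => ?_
      rw [T.le_sepTower_iff (by omega)]
      exact ⟨hp.2.2.1.trans hq.2.2.1.symm,
        T.succ_le_sepTime hi hp.2.2.2 hq.2.2.2 (hs _ hp.1 _ hq.1)⟩
    rw [T.towerMeasure_preimage_land hi hl ht hA, T.towerMeasure_preimage_land hi hl ht hA'] at h1
    have h2 := T.branch_distortion hi hA hA' hs
    set a := T.m₀ (T.Λ i ∩ T.FR ⁻¹' A)
    set a' := T.m₀ (T.Λ i ∩ T.FR ⁻¹' A') with ha'
    by_cases h0 : a' = 0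
    · rw [T.measure_eq_zero_of_branch hi hA' h0, mul_zero]
      exact zero_le
    · refine (ENNReal.mul_le_mul_iff_right h0 (measure_ne_top _ _)).1 ?_
      calc a' * (μ P * T.m₀ A') = μ P * a' * T.m₀ A' := by ring
        _ ≤ T.dist K (k + 1) * (μ P' * a) * T.m₀ A' := by gcongr
        _ = T.dist K (k + 1) * μ P' * (a * T.m₀ A') := by ring
        _ ≤ T.dist K (k + 1) * μ P' * (T.dist T.CF k * (a' * T.m₀ A)) := by gcongr
        _ = a' * (T.dist K (k + 1) * T.dist T.CF k * (μ P' * T.m₀ A)) := by ring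
        _ = _ := by rw [T.dist_mul_dist]
  · have : {p | T.hit p = t} ∩ T.pieceSet l i = ∅ := by
      refine Set.eq_empty_of_forall_notMem fun p hp => hl ?_
      have hR := T.R_eq i hi _ hp.2.2
      have h1 : T.R p.1.1 - p.1.2 = t := hp.1
      have h2 : p.1.2 = l := hp.2.1
      have h3 := p.2
      rw [hR, h2] at h1 h3
      exact ⟨h3, h1⟩
    rw [this, Set.inter_empty, measure_empty, zero_mul]
    exact zero_le

variable (T)

theorem towerMeasure_level_zero {A : Set T.Tower} (hA : MeasurableSet A)
    (h : ∀ p ∈ A, p.1.2 = 0) : T.towerMeasure A = T.m₀ (T.base ⁻¹' A) := by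
  rw [T.towerMeasure_apply hA, tsum_eq_single 0]
  · congr 1
    ext x
    exact ⟨fun ⟨_, hx⟩ => hx, fun hx => ⟨T.R_pos x, hx⟩⟩
  · intro l hl
    have : T.slice A l = ∅ := by
      refine Set.eq_empty_of_forall_notMem ?_
      rintro x ⟨_, hx⟩
      exact hl (h _ hx)
    rw [this, measure_empty]

/-- It is enough to check regularity on nonempty sets in a single level. -/
theorem treg_of_level {K : ℝ} {j : ℕ} {μ : Measure T.Tower}
    (h : ∀ k, j ≤ k → 1 ≤ k → ∀ A A', MeasurableSet A → MeasurableSet A' →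
      (∀ p ∈ A, ∀ q ∈ A', p.1.2 = q.1.2 ∧ (k : ℕ∞) ≤ sepTime T.I T.Λ T.FR p.1.1 q.1.1) →
      ∀ l, (∀ p ∈ A, p.1.2 = l) → (∀ p ∈ A', p.1.2 = l) →
      μ A * T.towerMeasure A' ≤ T.dist K k * (μ A' * T.towerMeasure A)) : T.TReg K j μ := by
  intro k hj hk A A' hA hA' hs
  have hs' : ∀ p ∈ A, ∀ q ∈ A',
      p.1.2 = q.1.2 ∧ (k : ℕ∞) ≤ sepTime T.I T.Λ T.FR p.1.1 q.1.1 :=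
    fun p hp q hq => (T.le_sepTower_iff hk).1 (hs p hp q hq)
  obtain rfl | ⟨p, hp⟩ := A.eq_empty_or_nonempty
  · simp
  obtain rfl | ⟨q, hq⟩ := A'.eq_empty_or_nonempty
  · simp
  refine h k hj hk A A' hA hA' hs' p.1.2 (fun p' hp' => ?_) fun q' hq' => (hs' p hp q' hq').1.symm
  rw [(hs' p' hp' q hq).1, (hs' p hp q hq).1]

variable {T}

theorem BReg.map_base {K : ℝ} {j : ℕ} {μ : Measure Δ₀} (h : T.BReg K j μ) :
    T.TReg K j (μ.map T.base) := by
  refine T.treg_of_level fun k hj hk A A' hA hA' hs l hl hl' => ?_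
  rw [Measure.map_apply T.measurable_base hA, Measure.map_apply T.measurable_base hA']
  by_cases h0 : l = 0
  · subst h0
    rw [T.towerMeasure_level_zero hA hl, T.towerMeasure_level_zero hA' hl']
    exact h k hj _ _ (T.measurable_base hA) (T.measurable_base hA')
      fun x hx y hy => (hs _ hx _ hy).2
  · have : T.base ⁻¹' A = ∅ :=
      Set.eq_empty_of_forall_notMem fun x hx => h0 (hl _ hx).symm
    rw [this, measure_empty, zero_mul]
    exact zero_le

theorem BReg.le {K : ℝ} {μ : Measure Δ₀} (h : T.BReg K 0 μ) :
    μ ≤ (T.dist K 0 / T.m₀ Set.univ * μ Set.univ) • T.m₀ := by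
  refine Measure.le_iff.2 fun A hA => ?_
  have := h 0 le_rfl A Set.univ hA MeasurableSet.univ fun _ _ _ _ => by simp
  rw [Measure.smul_apply, smul_eq_mul, div_eq_mul_inv,
    ← ENNReal.mul_le_mul_iff_left T.m₀_univ_ne_zero (measure_ne_top _ _)]
  refine this.trans (le_of_eq ?_)
  calc T.dist K 0 * (μ Set.univ * T.m₀ A)
      = T.dist K 0 * (μ Set.univ * T.m₀ A) * ((T.m₀ Set.univ)⁻¹ * T.m₀ Set.univ) := by
        rw [ENNReal.inv_mul_cancel T.m₀_univ_ne_zero (measure_ne_top _ _), mul_one]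
    _ = _ := by ring

theorem BReg.ge {K : ℝ} {μ : Measure Δ₀} (h : T.BReg K 0 μ) :
    ((T.dist K 0 * T.m₀ Set.univ)⁻¹ * μ Set.univ) • T.m₀ ≤ μ := by
  refine Measure.le_iff.2 fun A hA => ?_
  have := h 0 le_rfl Set.univ A MeasurableSet.univ hA fun _ _ _ _ => by simp
  have hne : T.dist K 0 * T.m₀ Set.univ ≠ 0 := mul_ne_zero (T.dist_ne_zero K 0) T.m₀_univ_ne_zero
  have hnt : T.dist K 0 * T.m₀ Set.univ ≠ ∞ :=
    ENNReal.mul_ne_top (T.dist_ne_top K 0) (measure_ne_top _ _)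
  rw [Measure.smul_apply, smul_eq_mul, ← ENNReal.mul_le_mul_iff_right hne hnt]
  calc T.dist K 0 * T.m₀ Set.univ * ((T.dist K 0 * T.m₀ Set.univ)⁻¹ * μ Set.univ * T.m₀ A)
      = T.dist K 0 * T.m₀ Set.univ * (T.dist K 0 * T.m₀ Set.univ)⁻¹ * (μ Set.univ * T.m₀ A) := by
        ring
    _ = μ Set.univ * T.m₀ A := by rw [ENNReal.mul_inv_cancel hne hnt, one_mul]
    _ ≤ _ := by rw [mul_assoc, mul_comm (T.m₀ Set.univ)]; exact this

variable (T)

theorem slice_shift (A : Set T.Tower) (l : ℕ) :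
    T.slice (T.towerMap ⁻¹' A ∩ {p | 1 < T.hit p}) l = T.slice A (l + 1) := by
  ext x
  constructor
  · rintro ⟨h, h1, h2⟩
    have h3 := T.towerMap_of_one_lt_hit h2
    have h4 : 1 < T.R x - l := h2
    have h6 : l + 1 < T.R x := by omega
    refine ⟨h6, ?_⟩
    have h5 : T.towerMap ⟨(x, l), h⟩ ∈ A := h1
    rwa [show T.towerMap ⟨(x, l), h⟩ = ⟨(x, l + 1), h6⟩ from Subtype.ext h3] at h5
  · rintro ⟨h, h1⟩
    have hl : l < T.R x := by omega
    have h2 : 1 < T.hit (⟨(x, l), hl⟩ : T.Tower) := by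
      change 1 < T.R x - l
      omega
    have h3 : T.towerMap ⟨(x, l), hl⟩ = ⟨(x, l + 1), h⟩ :=
      Subtype.ext (T.towerMap_of_one_lt_hit h2)
    refine ⟨hl, ?_, h2⟩
    change T.towerMap _ ∈ A
    rwa [h3]

theorem measurableSet_shift {A : Set T.Tower} (hA : MeasurableSet A) :
    MeasurableSet (T.towerMap ⁻¹' A ∩ {p | 1 < T.hit p}) :=
  (T.measurable_towerMap hA).inter (T.measurableSet_lt_hit 1)

theorem towerMeasure_eq_add_shift {A : Set T.Tower} (hA : MeasurableSet A) :
    T.towerMeasure A =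
      T.m₀ (T.slice A 0) + T.towerMeasure (T.towerMap ⁻¹' A ∩ {p | 1 < T.hit p}) := by
  rw [T.towerMeasure_apply hA, T.towerMeasure_apply (T.measurableSet_shift hA),
    tsum_eq_zero_add' ENNReal.summable]
  simp_rw [T.slice_shift]

variable {T}

theorem TReg.shift {K : ℝ} {j : ℕ} {μ : Measure T.Tower} (h : T.TReg K j μ) :
    T.TReg K j ((μ.restrict {p | 1 < T.hit p}).map T.towerMap) := by
  refine T.treg_of_level fun k hj hk A A' hA hA' hs l hl hl' => ?_
  rw [Measure.map_apply T.measurable_towerMap hA, Measure.map_apply T.measurable_towerMap hA',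
    Measure.restrict_apply (T.measurable_towerMap hA),
    Measure.restrict_apply (T.measurable_towerMap hA')]
  by_cases h0 : l = 0
  · have : T.towerMap ⁻¹' A ∩ {p | 1 < T.hit p} = ∅ := by
      refine Set.eq_empty_of_forall_notMem fun p hp => ?_
      have := hl _ hp.1
      rw [T.towerMap_of_one_lt_hit hp.2, h0] at this
      exact absurd this (Nat.succ_ne_zero _)
    rw [this, measure_empty, zero_mul]
    exact zero_le
  · have key : ∀ A : Set T.Tower, MeasurableSet A → (∀ p ∈ A, p.1.2 = l) →
        T.towerMeasure A = T.towerMeasure (T.towerMap ⁻¹' A ∩ {p | 1 < T.hit p}) := by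
      intro A hA hl
      rw [T.towerMeasure_eq_add_shift hA]
      have : T.slice A 0 = ∅ := by
        refine Set.eq_empty_of_forall_notMem ?_
        rintro x ⟨_, hx⟩
        exact h0 (hl _ hx).symm
      rw [this, measure_empty, zero_add]
    rw [key A hA hl, key A' hA' hl']
    refine h k hj hk _ _ (T.measurableSet_shift hA) (T.measurableSet_shift hA')
      fun p hp q hq => ?_
    have := hs _ hp.1 _ hq.1
    rw [T.towerMap_of_one_lt_hit hp.2, T.towerMap_of_one_lt_hit hq.2] at this
    exact (T.le_sepTower_iff hk).2 ⟨by simpa using this.1, this.2⟩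

end YoungTower

namespace YoungTower

variable {Δ₀ : Type*} [MeasurableSpace Δ₀] (T : YoungTower Δ₀)

/-- The regularity constant which holds before a return to the base. -/
def K₀ : ℝ := 2 * T.CF / (1 - T.β)

/-- The regularity constant which holds after a return to the base. -/
def K₁ : ℝ := T.K₀ * T.β + T.CF

theorem K₀_pos : 0 < T.K₀ :=
  div_pos (mul_pos two_pos T.CF_pos) (sub_pos.2 T.β_lt_one)

theorem K₁_eq : T.K₁ = (1 + T.β) / 2 * T.K₀ := by
  have : 1 - T.β ≠ 0 := (sub_pos.2 T.β_lt_one).ne'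
  unfold K₁ K₀
  field_simp
  ring

theorem K₁_le_K₀ : T.K₁ ≤ T.K₀ := by
  rw [K₁_eq]
  nlinarith [T.K₀_pos, T.β_lt_one]

theorem K₁_nonneg : 0 ≤ T.K₁ := by
  have := T.β_pos
  rw [K₁_eq]
  exact mul_nonneg (by linarith) T.K₀_pos.le

/-- The bound for the densities of tame probability measures. -/
def bound : ℝ≥0∞ := T.dist T.K₁ 0 / T.m₀ Set.univ

theorem bound_ne_top : T.bound ≠ ∞ := ENNReal.div_ne_top (T.dist_ne_top _ _) T.m₀_univ_ne_zero

theorem one_le_bound_mul : 1 ≤ T.bound * T.m₀ Set.univ := by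
  rw [bound, ENNReal.div_mul_cancel T.m₀_univ_ne_zero (measure_ne_top _ _)]
  exact T.one_le_dist T.K₁_nonneg 0

/-- Regular measures on the tower with a density which is bounded in terms of the mass. -/
structure Tame (μ : Measure T.Tower) : Prop where
  reg : T.TReg T.K₁ 1 μ
  le : μ ≤ (T.bound * μ Set.univ) • T.towerMeasure

/-- The push-forward of a measure by the `n`-th iterate of the tower map. -/
def push (n : ℕ) (μ : Measure T.Tower) : Measure T.Tower := μ.map T.towerMap^[n]

theorem push_zero (μ : Measure T.Tower) : T.push 0 μ = μ := Measure.map_id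

theorem push_apply (n : ℕ) (μ : Measure T.Tower) {A : Set T.Tower} (hA : MeasurableSet A) :
    T.push n μ A = μ (T.towerMap^[n] ⁻¹' A) := Measure.map_apply (T.measurable_iterate n) hA

theorem push_univ (n : ℕ) (μ : Measure T.Tower) : T.push n μ Set.univ = μ Set.univ := by
  rw [T.push_apply n μ MeasurableSet.univ, Set.preimage_univ]

theorem push_push (a b : ℕ) (μ : Measure T.Tower) : T.push a (T.push b μ) = T.push (a + b) μ := by
  unfold push
  rw [Measure.map_map (T.measurable_iterate a) (T.measurable_iterate b), Function.iterate_add]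

theorem push_comm (a b : ℕ) (μ : Measure T.Tower) :
    T.push a (T.push b μ) = T.push b (T.push a μ) := by
  rw [push_push, push_push, add_comm]

theorem push_sum {ι : Type*} (n : ℕ) (μ : ι → Measure T.Tower) :
    T.push n (Measure.sum μ) = Measure.sum fun i => T.push n (μ i) :=
  Measure.map_sum (T.measurable_iterate n).aemeasurable

theorem push_add (n : ℕ) (μ ν : Measure T.Tower) :
    T.push n (μ + ν) = T.push n μ + T.push n ν := Measure.map_add _ _ (T.measurable_iterate n)

theorem push_smul (n : ℕ) (c : ℝ≥0∞) (μ : Measure T.Tower) :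
    T.push n (c • μ) = c • T.push n μ := Measure.map_smul _ _ _

theorem push_zero_measure (n : ℕ) : T.push n 0 = 0 := Measure.map_zero _

theorem push_mono (n : ℕ) {μ ν : Measure T.Tower} (h : μ ≤ ν) : T.push n μ ≤ T.push n ν :=
  Measure.map_mono h (T.measurable_iterate n)

instance (n : ℕ) (μ : Measure T.Tower) [IsFiniteMeasure μ] : IsFiniteMeasure (T.push n μ) := by
  unfold push
  infer_instance

theorem eq_sum_restrict_hit (μ : Measure T.Tower) :
    μ = Measure.sum fun t => μ.restrict {p | T.hit p = t} := by
  rw [← Measure.restrict_iUnion]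
  · rw [show (⋃ t, {p | T.hit p = t}) = Set.univ from
      Set.eq_univ_of_forall fun p => Set.mem_iUnion.2 ⟨T.hit p, rfl⟩, Measure.restrict_univ]
  · exact fun t t' hne => Set.disjoint_left.2 fun p hp hp' => hne (hp.symm.trans hp')
  · exact T.measurableSet_hit_eq

/-- The part of a measure on the tower arriving at the base at time `t`. -/
def arrive (t : ℕ) (μ : Measure T.Tower) : Measure Δ₀ := (μ.restrict {p | T.hit p = t}).map T.land

theorem arrive_mono (t : ℕ) {μ ν : Measure T.Tower} (h : μ ≤ ν) : T.arrive t μ ≤ T.arrive t ν :=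
  Measure.map_mono (Measure.restrict_mono le_rfl h) T.measurable_land

theorem push_restrict_hit (t : ℕ) (μ : Measure T.Tower) :
    T.push t (μ.restrict {p | T.hit p = t}) = (T.arrive t μ).map T.base := by
  unfold push arrive
  rw [Measure.map_map T.measurable_base T.measurable_land]
  refine Measure.map_congr ?_
  filter_upwards [ae_restrict_mem (T.measurableSet_hit_eq t)] with p hp
  exact T.iterate_hit hp

theorem arrive_univ (t : ℕ) (μ : Measure T.Tower) :
    T.arrive t μ Set.univ = μ {p | T.hit p = t} := by
  rw [arrive, Measure.map_apply T.measurable_land MeasurableSet.univ, Set.preimage_univ,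
    Measure.restrict_apply_univ]

theorem tsum_arrive_univ (μ : Measure T.Tower) :
    ∑' t, T.arrive t μ Set.univ = μ Set.univ := by
  conv_rhs => rw [T.eq_sum_restrict_hit μ, Measure.sum_apply _ MeasurableSet.univ]
  simp_rw [arrive_univ, Measure.restrict_apply_univ]

/-- The part of the push-forward of a measure which has returned to the base by time `h`. -/
def returned (h : ℕ) (μ : Measure T.Tower) : Measure T.Tower :=
  Measure.sum fun t => if t ≤ h then T.push (h - t) ((T.arrive t μ).map T.base) else 0

/-- Decomposition of a push-forward according to the time of the first return. -/
theorem push_eq_returned_add (h : ℕ) (μ : Measure T.Tower) :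
    T.push h μ = T.returned h μ + T.push h (μ.restrict {p | h < T.hit p}) := by
  have hm := T.measurableSet_lt_hit h
  have h1 : μ.restrict {p | h < T.hit p}ᶜ = Measure.sum fun t =>
      if t ≤ h then μ.restrict {p | T.hit p = t} else 0 := by
    conv_lhs => rw [T.eq_sum_restrict_hit (μ.restrict {p | h < T.hit p}ᶜ)]
    congr 1
    funext t
    rw [Measure.restrict_restrict (T.measurableSet_hit_eq t)]
    split_ifs with ht
    · congr 1
      refine Set.inter_eq_left.2 fun p hp hp' => ?_
      have h2 : T.hit p = t := hp
      have h3 : h < T.hit p := hp'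
      omega
    · rw [show {p | T.hit p = t} ∩ {p | h < T.hit p}ᶜ = ∅ from
        Set.eq_empty_of_forall_notMem fun p hp => hp.2 ?_, Measure.restrict_empty]
      have h2 : T.hit p = t := hp.1
      change h < T.hit p
      omega
  conv_lhs => rw [← Measure.restrict_compl_add_restrict (μ := μ) hm, T.push_add, h1, T.push_sum]
  congr 2
  funext t
  split_ifs with ht
  · rw [← T.push_restrict_hit, T.push_push, Nat.sub_add_cancel ht]
  · exact T.push_zero_measure h

variable {T}

theorem Tame.absolutelyContinuous {μ : Measure T.Tower} (h : T.Tame μ) : μ ≪ T.towerMeasure :=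
  Measure.absolutelyContinuous_of_le_smul h.le

theorem Tame.sum {ι : Type*} {μ : ι → Measure T.Tower} (h : ∀ i, T.Tame (μ i)) :
    T.Tame (Measure.sum μ) := by
  refine ⟨TReg.sum fun i => (h i).reg, Measure.le_iff.2 fun A hA => ?_⟩
  rw [Measure.smul_apply, smul_eq_mul, Measure.sum_apply _ hA,
    Measure.sum_apply _ MeasurableSet.univ, ← ENNReal.tsum_mul_left, ← ENNReal.tsum_mul_right]
  exact ENNReal.tsum_le_tsum fun i => (h i).le A

theorem Tame.add {μ ν : Measure T.Tower} (h : T.Tame μ) (h' : T.Tame ν) : T.Tame (μ + ν) := by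
  refine ⟨h.reg.add h'.reg, Measure.le_iff.2 fun A hA => ?_⟩
  rw [Measure.smul_apply, smul_eq_mul, Measure.add_apply, Measure.add_apply, mul_add, add_mul]
  exact add_le_add (h.le A) (h'.le A)

theorem Tame.smul {μ : Measure T.Tower} (h : T.Tame μ) (c : ℝ≥0∞) : T.Tame (c • μ) := by
  refine ⟨h.reg.smul c, Measure.le_iff.2 fun A hA => ?_⟩
  rw [Measure.smul_apply, smul_eq_mul, Measure.smul_apply, smul_eq_mul, Measure.smul_apply,
    smul_eq_mul, mul_left_comm, mul_assoc]
  exact mul_le_mul_right (h.le A) c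

variable (T) in
theorem tame_zero : T.Tame 0 := by
  refine ⟨fun k _ _ A A' _ _ _ => ?_, ?_⟩ <;> simp

theorem Tame.ite {p : Prop} [Decidable p] {μ : Measure T.Tower} (h : p → T.Tame μ) :
    T.Tame (if p then μ else 0) := by
  split_ifs with hp
  · exact h hp
  · exact T.tame_zero

theorem BReg.tame {μ : Measure Δ₀} (h : T.BReg T.K₁ 0 μ) : T.Tame (μ.map T.base) := by
  refine ⟨h.map_base.of_zero 1, ?_⟩
  rw [Measure.map_apply T.measurable_base MeasurableSet.univ, Set.preimage_univ]
  calc μ.map T.base ≤ ((T.bound * μ Set.univ) • T.m₀).map T.base :=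
        Measure.map_mono h.le T.measurable_base
    _ = (T.bound * μ Set.univ) • T.m₀.map T.base := Measure.map_smul _ _ _
    _ ≤ _ := Measure.le_iff.2 fun A _ => mul_le_mul_right (T.map_base_le A) _

theorem TReg.arrive {j : ℕ} {μ : Measure T.Tower} (hac : μ ≪ T.towerMeasure)
    (h : T.TReg T.K₀ (j + 1) μ) (t : ℕ) : T.BReg T.K₁ j (T.arrive t μ) := h.map_land hac t

theorem TReg.arrive' {j : ℕ} {μ : Measure T.Tower} (hac : μ ≪ T.towerMeasure)
    (h : T.TReg T.K₁ (j + 1) μ) (t : ℕ) : T.BReg T.K₁ j (T.arrive t μ) :=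
  (h.mono T.K₁_le_K₀ le_rfl).arrive hac t

theorem Tame.push_one {μ : Measure T.Tower} (h : T.Tame μ) : T.Tame (T.push 1 μ) := by
  have hb := (h.reg.arrive' h.absolutelyContinuous 1).tame
  have hdec : T.push 1 μ =
      (T.arrive 1 μ).map T.base + (μ.restrict {p | 1 < T.hit p}).map T.towerMap := by
    rw [← T.push_restrict_hit]
    conv_lhs => rw [← Measure.restrict_compl_add_restrict (μ := μ) (T.measurableSet_lt_hit 1),
      T.push_add]
    congr 3
    ext p
    have := T.hit_pos p
    change (¬ 1 < T.hit p) ↔ T.hit p = 1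
    omega
  refine ⟨?_, Measure.le_iff.2 fun A hA => ?_⟩
  · rw [hdec]
    exact hb.reg.add h.reg.shift
  · rw [T.push_univ, Measure.smul_apply, smul_eq_mul, T.towerMeasure_eq_add_shift hA, mul_add,
      hdec, Measure.add_apply, Measure.map_apply T.measurable_base hA,
      Measure.map_apply T.measurable_towerMap hA,
      Measure.restrict_apply (T.measurable_towerMap hA)]
    refine add_le_add ?_ (h.le _)
    have h1 := (h.reg.arrive' h.absolutelyContinuous 1).le (T.base ⁻¹' A)
    rw [Measure.smul_apply, smul_eq_mul] at h1
    refine h1.trans (mul_le_mul' (mul_le_mul' le_rfl ?_) (measure_mono ?_))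
    · rw [T.arrive_univ]
      exact measure_mono (Set.subset_univ _)
    · exact fun x hx => ⟨T.R_pos x, hx⟩

theorem Tame.push {μ : Measure T.Tower} (h : T.Tame μ) (n : ℕ) : T.Tame (T.push n μ) := by
  induction n with
  | zero => rwa [T.push_zero]
  | succ n ih =>
    rw [add_comm, ← T.push_push]
    exact ih.push_one

theorem TReg.tame_returned {μ : Measure T.Tower} (hac : μ ≪ T.towerMeasure)
    (h : T.TReg T.K₀ 1 μ) (n : ℕ) : T.Tame (T.returned n μ) :=
  Tame.sum fun t => Tame.ite fun _ => ((h.arrive hac t).tame).push _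

/-- The measure of the set of points which do not arrive at the base by time `h`. -/
def tail (T : YoungTower Δ₀) (h : ℕ) : ℝ≥0∞ := T.towerMeasure {p | h < T.hit p}

theorem Tame.tail_le {w : Measure T.Tower} (h : T.Tame w) (n : ℕ) :
    w {p | n < T.hit p} ≤ T.bound * w Set.univ * T.tail n := h.le _

/-- A decomposition of what arrives at the base extends to the whole measure. -/
theorem Tame.exists_decomp_of_arrive {μ w : Measure T.Tower} (hw : T.Tame w) (hle : μ ≤ w)
    (n h : ℕ) (c : ℝ≥0∞)
    (H : ∀ t, ∃ α r, T.push n ((T.arrive t μ).map T.base) = α + r ∧ T.Tame α ∧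
      r Set.univ ≤ c * T.arrive t w Set.univ) :
    ∃ α r, T.push (n + h) μ = α + r ∧ T.Tame α ∧
      r Set.univ ≤ c * w Set.univ + T.bound * w Set.univ * T.tail h := by
  choose α r hαr hα hrm using H
  refine ⟨Measure.sum fun t => if t ≤ h then T.push (h - t) (α t) else 0,
    (Measure.sum fun t => if t ≤ h then T.push (h - t) (r t) else 0) +
      T.push n (T.push h (μ.restrict {p | h < T.hit p})), ?_, ?_, ?_⟩
  · rw [← add_assoc, Measure.sum_add_sum, ← T.push_push, T.push_eq_returned_add h, T.push_add,
      returned, T.push_sum]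
    congr 2
    funext t
    split_ifs with ht
    · rw [T.push_comm, hαr, T.push_add]
    · rw [T.push_zero_measure, add_zero]
  · exact Tame.sum fun t => Tame.ite fun _ => (hα t).push _
  · rw [Measure.add_apply, T.push_univ, T.push_univ, Measure.restrict_apply_univ,
      Measure.sum_apply _ MeasurableSet.univ]
    refine add_le_add ?_ ((hle _).trans (hw.tail_le h))
    rw [← T.tsum_arrive_univ w, ← ENNReal.tsum_mul_left]
    refine ENNReal.tsum_le_tsum fun t => ?_
    split_ifs
    · rw [T.push_univ]
      exact hrm t
    · exact zero_le

theorem exists_decomp_base (h j : ℕ) : ∀ {μ w : Measure Δ₀}, T.BReg T.K₁ j μ → T.BReg T.K₁ 0 w →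
    μ ≤ w → ∃ α r, T.push (j * h) (μ.map T.base) = α + r ∧ T.Tame α ∧
      r Set.univ ≤ j * (T.bound * T.tail h) * w Set.univ := by
  induction j with
  | zero =>
    intro μ w hμ _ _
    exact ⟨μ.map T.base, 0, by rw [zero_mul, T.push_zero, add_zero], hμ.tame, by simp⟩
  | succ j ih =>
    intro μ w hμ hw hle
    have hle' : μ.map T.base ≤ w.map T.base := Measure.map_mono hle T.measurable_base
    have hwt := hw.tame
    have hac : μ.map T.base ≪ T.towerMeasure :=
      (Measure.absolutelyContinuous_of_le hle').trans hwt.absolutelyContinuous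
    obtain ⟨α, r, h1, h2, h3⟩ := hwt.exists_decomp_of_arrive hle' (j * h) h _ fun t =>
      ih (hμ.map_base.arrive' hac t) (hwt.reg.arrive' hwt.absolutelyContinuous t)
        (T.arrive_mono t hle')
    refine ⟨α, r, by rw [Nat.succ_mul, h1], h2, h3.trans_eq ?_⟩
    rw [Measure.map_apply T.measurable_base MeasurableSet.univ, Set.preimage_univ, Nat.cast_succ]
    ring

/-- A measure which is regular at the scale of cylinders of length `j + 1` becomes tame after
`j + 1` returns to the base. -/
theorem TReg.exists_decomp {j : ℕ} {μ w : Measure T.Tower} (hμ : T.TReg T.K₁ (j + 1) μ)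
    (hw : T.Tame w) (hle : μ ≤ w) (h : ℕ) :
    ∃ α r, T.push ((j + 1) * h) μ = α + r ∧ T.Tame α ∧
      r Set.univ ≤ (j + 1 : ℕ) * (T.bound * T.tail h) * w Set.univ := by
  have hac : μ ≪ T.towerMeasure :=
    (Measure.absolutelyContinuous_of_le hle).trans hw.absolutelyContinuous
  obtain ⟨α, r, h1, h2, h3⟩ := hw.exists_decomp_of_arrive hle (j * h) h _ fun t =>
    exists_decomp_base h j (hμ.arrive' hac t) (hw.reg.arrive' hw.absolutelyContinuous t)
      (T.arrive_mono t hle)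
  refine ⟨α, r, by rw [Nat.succ_mul, h1], h2, h3.trans_eq ?_⟩
  rw [Nat.cast_succ]
  ring

end YoungTower

namespace YoungTower

variable {Δ₀ : Type*} [MeasurableSpace Δ₀] (T : YoungTower Δ₀)

/-- The reference measure of the base, as a measure on the tower. -/
def ground : Measure T.Tower := T.m₀.map T.base

instance : IsFiniteMeasure T.ground := by
  unfold ground
  infer_instance

theorem ground_univ : T.ground Set.univ = T.m₀ Set.univ := by
  rw [ground, Measure.map_apply T.measurable_base MeasurableSet.univ, Set.preimage_univ]

theorem tame_ground : T.Tame T.ground := by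
  refine BReg.tame fun k _ A A' _ _ _ => ?_
  rw [mul_comm (T.m₀ A)]
  exact le_mul_of_one_le_left zero_le (T.one_le_dist T.K₁_nonneg k)

theorem tame_towerMeasure : T.Tame T.towerMeasure := by
  refine ⟨fun k _ _ A A' _ _ _ => ?_, Measure.le_iff.2 fun A _ => ?_⟩
  · rw [mul_comm (T.towerMeasure A)]
    exact le_mul_of_one_le_left zero_le (T.one_le_dist T.K₁_nonneg k)
  · rw [Measure.smul_apply, smul_eq_mul]
    refine le_mul_of_one_le_left zero_le (T.one_le_bound_mul.trans ?_)
    gcongr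
    rw [← T.ground_univ]
    exact T.map_base_le _

variable {T}

theorem BReg.smul_ground_le {μ : Measure Δ₀} (h : T.BReg T.K₁ 0 μ) :
    ((T.dist T.K₁ 0 * T.m₀ Set.univ)⁻¹ * μ Set.univ) • T.ground ≤ μ.map T.base := by
  rw [ground, ← Measure.map_smul]
  exact Measure.map_mono h.ge T.measurable_base

variable (T)

theorem lowerConst_ne_zero : (T.dist T.K₁ 0 * T.m₀ Set.univ)⁻¹ ≠ 0 :=
  ENNReal.inv_ne_zero.2 (ENNReal.mul_ne_top (T.dist_ne_top _ _) (measure_ne_top _ _))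

/-- The times at which the push-forward of the reference measure of the base dominates a multiple
of that measure. -/
def renewalTimes : AddSubmonoid ℕ where
  carrier := {s | ∃ c : ℝ≥0∞, c ≠ 0 ∧ c • T.ground ≤ T.push s T.ground}
  zero_mem' := ⟨1, one_ne_zero, by rw [one_smul, T.push_zero]⟩
  add_mem' := by
    rintro a b ⟨c, hc, h⟩ ⟨c', hc', h'⟩
    refine ⟨c' * c, mul_ne_zero hc' hc, ?_⟩
    rw [← T.push_push]
    refine le_trans ?_ (T.push_mono a h')
    rw [T.push_smul, mul_smul]
    exact Measure.le_iff.2 fun A _ => mul_le_mul_right (h A) _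

theorem ret_mem_renewalTimes {i : ℕ} (hi : i ∈ T.I) : T.Ret i ∈ T.renewalTimes := by
  have hg := T.tame_ground
  have hb := hg.reg.arrive' hg.absolutelyContinuous (T.Ret i)
  refine ⟨_, mul_ne_zero T.lowerConst_ne_zero ?_, hb.smul_ground_le.trans ?_⟩
  · rw [T.arrive_univ, ground, Measure.map_apply T.measurable_base (T.measurableSet_hit_eq _)]
    refine ((T.Λ_pos i hi).trans_le (measure_mono fun x hx => ?_)).ne'
    exact T.R_eq i hi x hx
  · rw [← T.push_restrict_hit]
    exact T.push_mono _ Measure.restrict_le_self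

theorem exists_forall_mem_renewalTimes : ∃ N, ∀ n ≥ N, n ∈ T.renewalTimes := by
  obtain ⟨N, hN⟩ := Nat.exists_mem_closure_of_ge (T.Ret '' T.I)
  have hg : Nat.setGcd (T.Ret '' T.I) = 1 :=
    T.Ret_gcd _ fun i hi => Nat.setGcd_dvd_of_mem (Set.mem_image_of_mem _ hi)
  refine ⟨N, fun n hn => ?_⟩
  have hle : AddSubmonoid.closure (T.Ret '' T.I) ≤ T.renewalTimes := by
    rw [AddSubmonoid.closure_le]
    rintro _ ⟨i, hi, rfl⟩
    exact T.ret_mem_renewalTimes hi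
  exact hle (hN n hn (by rw [hg]; exact one_dvd n))

variable {T}

theorem Tame.half_le_returned {μ : Measure T.Tower} (hμ : T.Tame μ) (hfin : μ Set.univ ≠ ∞) {t : ℕ}
    (ht : T.bound * T.tail t ≤ 2⁻¹) : 2⁻¹ * μ Set.univ ≤ T.returned t μ Set.univ := by
  have h1 : μ Set.univ ≤ T.returned t μ Set.univ + 2⁻¹ * μ Set.univ := by
    conv_lhs => rw [← T.push_univ t, T.push_eq_returned_add, Measure.add_apply, T.push_univ,
      Measure.restrict_apply_univ]
    gcongr
    calc μ {p | t < T.hit p} ≤ T.bound * μ Set.univ * T.tail t := hμ.tail_le t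
      _ = T.bound * T.tail t * μ Set.univ := by ring
      _ ≤ _ := by gcongr
  have h2 : μ Set.univ = 2⁻¹ * μ Set.univ + 2⁻¹ * μ Set.univ := by
    rw [← add_mul, ENNReal.inv_two_add_inv_two, one_mul]
  have h3 : 2⁻¹ * μ Set.univ ≠ ∞ := ENNReal.mul_ne_top (by simp) hfin
  rw [h2] at h1
  exact (ENNReal.add_le_add_iff_right h3).1 (by rwa [← h2] at h1 ⊢)

variable (T) in
/-- After a fixed time, tame measures dominate a fixed proportion of the reference measure of
the base. -/
theorem exists_ground_le_push (htail : Filter.Tendsto T.tail Filter.atTop (nhds 0)) :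
    ∃ N, ∃ δ : ℝ≥0∞, δ ≠ 0 ∧ ∀ μ, T.Tame μ → μ Set.univ ≠ ∞ →
      (δ * μ Set.univ) • T.ground ≤ T.push N μ := by
  obtain ⟨N, hN⟩ := T.exists_forall_mem_renewalTimes
  have h1 : Filter.Tendsto (fun t => T.bound * T.tail t) Filter.atTop (nhds 0) := by
    simpa using ENNReal.Tendsto.const_mul htail (Or.inr T.bound_ne_top)
  obtain ⟨t₀, ht₀⟩ := (h1.eventually (ge_mem_nhds (by simp : (0 : ℝ≥0∞) < 2⁻¹))).exists
  choose c hc0 hc using hN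
  set u : ℝ≥0∞ := (Finset.range (t₀ + 1)).inf fun s => c (N + s) (by simp) with hu
  have hu0 : u ≠ 0 := by
    refine (Finset.lt_inf_iff (by simp)).2 (fun s _ => ?_) |>.ne'
    exact pos_iff_ne_zero.2 (hc0 _ _)
  set c₁ := (T.dist T.K₁ 0 * T.m₀ Set.univ)⁻¹ with hc₁
  refine ⟨N + t₀, c₁ * u * 2⁻¹, mul_ne_zero (mul_ne_zero T.lowerConst_ne_zero hu0) (by simp),
    fun μ hμ hfin => ?_⟩
  have h2 : T.push N (T.returned t₀ μ) ≤ T.push (N + t₀) μ := by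
    rw [← T.push_push]
    refine T.push_mono N ?_
    rw [T.push_eq_returned_add]
    exact Measure.le_add_right le_rfl
  refine le_trans (Measure.le_iff.2 fun A hA => ?_) h2
  rw [Measure.smul_apply, smul_eq_mul]
  calc c₁ * u * 2⁻¹ * μ Set.univ * T.ground A
      = c₁ * u * (2⁻¹ * μ Set.univ) * T.ground A := by ring
    _ ≤ c₁ * u * (T.returned t₀ μ Set.univ) * T.ground A := by
        gcongr
        exact hμ.half_le_returned hfin ht₀
    _ = ∑' t, c₁ * u *
        (if t ≤ t₀ then T.push (t₀ - t) ((T.arrive t μ).map T.base) else 0) Set.univ *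
          T.ground A := by
        rw [returned, Measure.sum_apply _ MeasurableSet.univ, ← ENNReal.tsum_mul_left,
          ← ENNReal.tsum_mul_right]
    _ ≤ ∑' t, T.push N
        (if t ≤ t₀ then T.push (t₀ - t) ((T.arrive t μ).map T.base) else 0) A := by
        refine ENNReal.tsum_le_tsum fun t => ?_
        split_ifs with ht
        · rw [T.push_push, T.push_univ, Measure.map_apply T.measurable_base MeasurableSet.univ,
            Set.preimage_univ]
          have h3 := (hμ.reg.arrive' hμ.absolutelyContinuous t).smul_ground_le
          have h4 := T.push_mono (N + (t₀ - t)) h3 A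
          rw [T.push_smul, Measure.smul_apply, smul_eq_mul] at h4
          refine le_trans ?_ h4
          have h5 : u * T.ground A ≤ T.push (N + (t₀ - t)) T.ground A := by
            refine le_trans ?_ (hc (N + (t₀ - t)) (by simp) A)
            rw [Measure.smul_apply, smul_eq_mul]
            gcongr
            exact Finset.inf_le (f := fun s => c (N + s) (by simp))
              (Finset.mem_range.2 (by omega))
          calc c₁ * u * T.arrive t μ Set.univ * T.ground A
              = c₁ * T.arrive t μ Set.univ * (u * T.ground A) := by ring
            _ ≤ _ := by gcongr
        · simp
    _ = T.push N (T.returned t₀ μ) A := by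
        rw [returned, T.push_sum, Measure.sum_apply _ hA]

theorem exp_sub_le {x x' y y' a s b : ℝ} (h : x * y' ≤ Real.exp (s * b) * (x' * y))
    (hx' : a * y' ≤ x') (hx'0 : 0 ≤ x') (hy : 0 ≤ y) (hs : 0 ≤ s) (hs1 : s ≤ 1) (hb : 0 ≤ b) :
    (x - (1 - s) * a * y) * y' ≤ Real.exp b * ((x' - (1 - s) * a * y') * y) := by
  have h1 : Real.exp (s * b) ≤ s * Real.exp b + (1 - s) := by
    have := convexOn_exp.2 (Set.mem_univ b) (Set.mem_univ 0) hs (sub_nonneg.2 hs1) (by ring)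
    simpa using this
  have h2 : 1 ≤ Real.exp b := Real.one_le_exp hb
  have h3 : 0 ≤ (1 - s) * (Real.exp b - 1) := mul_nonneg (by linarith) (by linarith)
  have h4 : 0 ≤ (s * Real.exp b + (1 - s) - Real.exp (s * b)) * (x' * y) :=
    mul_nonneg (by linarith) (mul_nonneg hx'0 hy)
  have h5 : 0 ≤ (1 - s) * (Real.exp b - 1) * ((x' - a * y') * y) :=
    mul_nonneg h3 (mul_nonneg (by linarith) hy)
  nlinarith

theorem half_mem : 0 ≤ (1 + T.β) / 2 ∧ (1 + T.β) / 2 ≤ 1 :=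
  ⟨by linarith [T.β_pos], by linarith [T.β_lt_one]⟩

/-- Subtracting a small multiple of the reference measure of the base preserves regularity, with
a larger constant. -/
theorem TReg.sub_ground {μ : Measure T.Tower} [IsFiniteMeasure μ] (h : T.TReg T.K₁ 1 μ)
    {a : ℝ} (ha : 0 ≤ a) (hle : ENNReal.ofReal a • T.ground ≤ μ) :
    T.TReg T.K₀ 1 (μ - ENNReal.ofReal ((1 - (1 + T.β) / 2) * a) • T.ground) := by
  have hσ := T.half_mem
  set σ := (1 + T.β) / 2 with hσdef
  have hc : 0 ≤ (1 - σ) * a := mul_nonneg (by linarith) ha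
  have hca : (1 - σ) * a ≤ a := by nlinarith
  have hle' : ENNReal.ofReal ((1 - σ) * a) • T.ground ≤ μ := by
    refine le_trans (Measure.le_iff.2 fun A _ => ?_) hle
    rw [Measure.smul_apply, Measure.smul_apply, smul_eq_mul, smul_eq_mul]
    gcongr
  have : IsFiniteMeasure (ENNReal.ofReal ((1 - σ) * a) • T.ground) :=
    isFiniteMeasure_of_le μ hle'
  refine T.treg_of_level fun k hj hk A A' hA hA' hs l hl hl' => ?_
  have hreg := h k hj hk A A' hA hA' fun p hp q hq => (T.le_sepTower_iff hk).2 (hs p hp q hq)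
  rw [Measure.sub_apply hA hle', Measure.sub_apply hA' hle', Measure.smul_apply,
    Measure.smul_apply, smul_eq_mul, smul_eq_mul]
  by_cases h0 : l = 0
  · subst h0
    have hg : ∀ A, MeasurableSet A → (∀ p ∈ A, p.1.2 = 0) → T.towerMeasure A = T.ground A :=
      fun A hA hl => by
        rw [T.towerMeasure_level_zero hA hl, ground, Measure.map_apply T.measurable_base hA]
    rw [hg A hA hl, hg A' hA' hl'] at hreg ⊢
    have hy : ∀ A, ENNReal.ofReal ((1 - σ) * a) * T.ground A ≤ μ A := fun A => hle' A
    have hfin : ∀ A, ENNReal.ofReal ((1 - σ) * a) * T.ground A ≠ ∞ := fun A =>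
      ne_top_of_le_ne_top (measure_ne_top _ _) (hy A)
    have hreg' : (μ A).toReal * (T.ground A').toReal ≤
        Real.exp (σ * (T.K₀ * T.β ^ k)) * ((μ A').toReal * (T.ground A).toReal) := by
      have := ENNReal.toReal_mono (ENNReal.mul_ne_top (T.dist_ne_top _ _)
        (ENNReal.mul_ne_top (measure_ne_top _ _) (measure_ne_top _ _))) hreg
      rw [ENNReal.toReal_mul, ENNReal.toReal_mul, ENNReal.toReal_mul, dist,
        ENNReal.toReal_ofReal (Real.exp_pos _).le, K₁_eq, mul_assoc] at this
      exact this
    have hlow : a * (T.ground A').toReal ≤ (μ A').toReal := by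
      have := ENNReal.toReal_mono (measure_ne_top _ _) (hle A')
      rwa [Measure.smul_apply, smul_eq_mul, ENNReal.toReal_mul, ENNReal.toReal_ofReal ha] at this
    have hfinal := exp_sub_le hreg' hlow ENNReal.toReal_nonneg ENNReal.toReal_nonneg hσ.1 hσ.2
      (mul_nonneg T.K₀_pos.le (pow_nonneg T.β_pos.le k))
    rw [← ENNReal.toReal_le_toReal (ENNReal.mul_ne_top
      (ne_top_of_le_ne_top (measure_ne_top _ _) tsub_le_self) (measure_ne_top _ _))
      (ENNReal.mul_ne_top (T.dist_ne_top _ _) (ENNReal.mul_ne_top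
      (ne_top_of_le_ne_top (measure_ne_top _ _) tsub_le_self) (measure_ne_top _ _))),
      ENNReal.toReal_mul, ENNReal.toReal_mul, ENNReal.toReal_mul,
      ENNReal.toReal_sub_of_le (hy A) (measure_ne_top _ _),
      ENNReal.toReal_sub_of_le (hy A') (measure_ne_top _ _), ENNReal.toReal_mul,
      ENNReal.toReal_mul, ENNReal.toReal_ofReal hc, dist,
      ENNReal.toReal_ofReal (Real.exp_pos _).le]
    exact hfinal
  · have hg : ∀ A, MeasurableSet A → (∀ p ∈ A, p.1.2 = l) → T.ground A = 0 := fun A hA hl => by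
      rw [ground, Measure.map_apply T.measurable_base hA,
        show T.base ⁻¹' A = ∅ from
          Set.eq_empty_of_forall_notMem fun x hx => h0 (hl _ hx).symm, measure_empty]
    rw [hg A hA hl, hg A' hA' hl', mul_zero, tsub_zero, tsub_zero]
    exact hreg.trans (mul_le_mul_left (T.dist_mono T.K₁_le_K₀ k) _)

variable (T) in
/-- The coupling step: after a fixed time, a fixed proportion of a tame measure can be split off
as a multiple of the reference measure of the base, and most of what remains becomes tame. -/
theorem exists_coupling_step (htail : Filter.Tendsto T.tail Filter.atTop (nhds 0)) :
    ∃ N, ∃ ε : ℝ, 0 < ε ∧ ∀ μ, T.Tame μ → μ Set.univ ≠ ∞ → ∀ h, ∃ α r,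
      T.push (N + h) μ = (ENNReal.ofReal ε * μ Set.univ) • T.push h T.ground + α + r ∧
      T.Tame α ∧ r Set.univ ≤ T.bound * μ Set.univ * T.tail h := by
  obtain ⟨N, δ, hδ, H⟩ := T.exists_ground_le_push htail
  obtain ⟨d, hd0, hdδ⟩ : ∃ d : ℝ, 0 < d ∧ ENNReal.ofReal d ≤ δ := by
    refine ⟨(min δ 1).toReal, ENNReal.toReal_pos (by simp [hδ]) (by simp), ?_⟩
    rw [ENNReal.ofReal_toReal (by simp)]
    exact min_le_left _ _
  have hσ := T.half_mem
  have hσ1 : 0 < 1 - (1 + T.β) / 2 := by linarith [T.β_lt_one]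
  refine ⟨N, (1 - (1 + T.β) / 2) * d, mul_pos hσ1 hd0, fun μ hμ hfin h => ?_⟩
  have : IsFiniteMeasure μ := ⟨lt_top_iff_ne_top.2 hfin⟩
  set a : ℝ := d * (μ Set.univ).toReal with ha
  have ha0 : 0 ≤ a := mul_nonneg hd0.le ENNReal.toReal_nonneg
  have hle : ENNReal.ofReal a • T.ground ≤ T.push N μ := by
    refine le_trans (Measure.le_iff.2 fun A _ => ?_) (H μ hμ hfin)
    rw [Measure.smul_apply, Measure.smul_apply, smul_eq_mul, smul_eq_mul, ha,
      ENNReal.ofReal_mul hd0.le, ENNReal.ofReal_toReal hfin]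
    gcongr
  have hmul : ENNReal.ofReal ((1 - (1 + T.β) / 2) * a) =
      ENNReal.ofReal ((1 - (1 + T.β) / 2) * d) * μ Set.univ := by
    rw [ha, ← mul_assoc, ENNReal.ofReal_mul (mul_pos hσ1 hd0).le, ENNReal.ofReal_toReal hfin]
  have hreg := (hμ.push N).reg.sub_ground ha0 hle
  have hle' : ENNReal.ofReal ((1 - (1 + T.β) / 2) * a) • T.ground ≤ T.push N μ := by
    refine le_trans (Measure.le_iff.2 fun A _ => ?_) hle
    rw [Measure.smul_apply, Measure.smul_apply, smul_eq_mul, smul_eq_mul]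
    gcongr
    nlinarith
  have : IsFiniteMeasure (ENNReal.ofReal ((1 - (1 + T.β) / 2) * a) • T.ground) :=
    isFiniteMeasure_of_le _ hle'
  set κ := T.push N μ - ENNReal.ofReal ((1 - (1 + T.β) / 2) * a) • T.ground with hκ
  have hκle : κ ≤ T.push N μ := Measure.sub_le
  have hac : κ ≪ T.towerMeasure :=
    (Measure.absolutelyContinuous_of_le hκle).trans (hμ.push N).absolutelyContinuous
  refine ⟨T.returned h κ, T.push h (κ.restrict {p | h < T.hit p}), ?_, hreg.tame_returned hac h, ?_⟩
  · rw [add_assoc, ← T.push_eq_returned_add, ← hmul, ← T.push_smul, ← T.push_add, add_comm N h,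
      ← T.push_push, add_comm _ κ, hκ, Measure.sub_add_cancel_of_le hle']
  · rw [T.push_univ, Measure.restrict_apply_univ]
    refine (hκle _).trans (((hμ.push N).tail_le h).trans_eq ?_)
    rw [T.push_univ]

end YoungTower

/-- Two measures are `ε`-close if they have a common part up to remainders of mass at most `ε`. -/
def Close {X : Type*} [MeasurableSpace X] (ε : ℝ≥0∞) (μ ν : Measure X) : Prop :=
  ∃ c r r', μ = c + r ∧ ν = c + r' ∧ r Set.univ ≤ ε ∧ r' Set.univ ≤ ε

theorem Close.symm {X : Type*} [MeasurableSpace X] {ε : ℝ≥0∞} {μ ν : Measure X}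
    (h : Close ε μ ν) : Close ε ν μ := by
  obtain ⟨c, r, r', h1, h2, h3, h4⟩ := h
  exact ⟨c, r', r, h2, h1, h4, h3⟩

theorem Close.mono {X : Type*} [MeasurableSpace X] {ε ε' : ℝ≥0∞} {μ ν : Measure X}
    (h : Close ε μ ν) (hε : ε ≤ ε') : Close ε' μ ν := by
  obtain ⟨c, r, r', h1, h2, h3, h4⟩ := h
  exact ⟨c, r, r', h1, h2, h3.trans hε, h4.trans hε⟩

theorem Close.apply_le {X : Type*} [MeasurableSpace X] {ε : ℝ≥0∞} {μ ν : Measure X}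
    (h : Close ε μ ν) (A : Set X) : μ A ≤ ν A + ε := by
  obtain ⟨c, r, r', rfl, rfl, h3, h4⟩ := h
  rw [Measure.add_apply, Measure.add_apply, add_assoc]
  gcongr
  exact ((measure_mono (Set.subset_univ A)).trans h3).trans le_add_self

/-- A sequence satisfying the recursion obtained by coupling decays polynomially. -/
theorem exists_polynomial_recursion {q γ b : ℝ} (hq : 0 ≤ q) (hq1 : q < 1) (hγ : 0 < γ)
    (hb : 0 ≤ b) (N : ℕ) :
    ∃ A : ℝ, 0 < A ∧ ∃ n₀ : ℕ, (∀ n : ℕ, 1 ≤ n → n ≤ n₀ → 1 ≤ A * (n : ℝ) ^ (-γ)) ∧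
      ∀ n, n₀ < n → ∃ h n' : ℕ, 1 ≤ h ∧ 1 ≤ n' ∧ n' < n ∧ n = n' + (N + h) ∧
        q * (A * (n' : ℝ) ^ (-γ)) + b * (h : ℝ) ^ (-γ) ≤ A * (n : ℝ) ^ (-γ) := by
  obtain ⟨s, hs0, hs1, hs⟩ : ∃ s : ℝ, 0 < s ∧ s < 1 ∧ q * s ^ (-γ) ≤ (1 + q) / 2 := by
    have h1 : Filter.Tendsto (fun s : ℝ => q * s ^ (-γ)) (nhdsWithin 1 (Set.Iio 1)) (nhds q) := by
      have : ContinuousAt (fun s : ℝ => q * s ^ (-γ)) 1 :=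
        continuousAt_const.mul (Real.continuousAt_rpow_const _ _ (Or.inl one_ne_zero))
      have h2 := this.tendsto
      rw [Real.one_rpow, mul_one] at h2
      exact h2.mono_left nhdsWithin_le_nhds
    have h2 := h1.eventually (ge_mem_nhds (show q < (1 + q) / 2 by linarith))
    have h3 : ∀ᶠ s : ℝ in nhdsWithin 1 (Set.Iio 1), s ∈ Set.Ioo (0 : ℝ) 1 :=
      Ioo_mem_nhdsLT one_pos
    obtain ⟨s, h4, h5⟩ := (h2.and h3).exists
    exact ⟨s, h5.1, h5.2, h4⟩
  set d : ℝ := (1 - s) / 4 with hd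
  have hd0 : 0 < d := by rw [hd]; linarith
  obtain ⟨n₀, hn₀⟩ := exists_nat_ge ((N + 1) / d)
  have hn₀' : (N : ℝ) + 1 ≤ n₀ * d := (div_le_iff₀ hd0).1 hn₀
  have hn₀pos : (0 : ℝ) < n₀ := by
    by_contra hneg
    have : (n₀ : ℝ) = 0 := le_antisymm (not_lt.1 hneg) (Nat.cast_nonneg _)
    rw [this] at hn₀'
    have := Nat.cast_nonneg (α := ℝ) N
    linarith
  set A : ℝ := max ((n₀ : ℝ) ^ γ) (2 * (b * d ^ (-γ)) / (1 - q)) with hA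
  have hA0 : 0 < A := lt_of_lt_of_le (Real.rpow_pos_of_pos hn₀pos γ) (le_max_left _ _)
  refine ⟨A, hA0, n₀, fun n hn hnn => ?_, fun n hn => ?_⟩
  · have hn' : (0 : ℝ) < n := by exact_mod_cast hn
    have h1 : (n₀ : ℝ) ^ (-γ) ≤ (n : ℝ) ^ (-γ) :=
      Real.rpow_le_rpow_of_nonpos hn' (by exact_mod_cast hnn) (by linarith)
    calc (1 : ℝ) = (n₀ : ℝ) ^ γ * (n₀ : ℝ) ^ (-γ) := by
          rw [← Real.rpow_add hn₀pos, add_neg_cancel, Real.rpow_zero]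
      _ ≤ A * (n : ℝ) ^ (-γ) := by
          gcongr
          exact le_max_left _ _
  · have hnn : (n₀ : ℝ) ≤ n := by exact_mod_cast hn.le
    have hnpos : (0 : ℝ) < n := hn₀pos.trans_le hnn
    have hnd : (N : ℝ) + 1 ≤ n * d := hn₀'.trans (by gcongr)
    set h := ⌊2 * d * n⌋₊ with hh
    have hh1 : (h : ℝ) ≤ 2 * d * n := Nat.floor_le (by positivity)
    have hh2 : 2 * d * n < h + 1 := Nat.lt_floor_add_one _
    have hN := Nat.cast_nonneg (α := ℝ) N
    have hh3 : d * n ≤ h := by linarith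
    have hh4 : 0 < h := by
      have : (0 : ℝ) < h := by nlinarith
      exact_mod_cast this
    have hsn : s * n = n - 4 * d * n := by rw [hd]; ring
    have h5 : (N : ℝ) + h ≤ n - s * n - 1 := by linarith
    have h6 : N + h < n := by
      have : (N : ℝ) + h < n := by nlinarith
      exact_mod_cast this
    refine ⟨h, n - (N + h), hh4, by omega, by omega, by omega, ?_⟩
    have h7 : ((n - (N + h) : ℕ) : ℝ) = n - (N + h) := by
      rw [Nat.cast_sub h6.le]
      push_cast
      ring
    have h8 : s * n ≤ ((n - (N + h) : ℕ) : ℝ) := by rw [h7]; linarith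
    have h9 : ((n - (N + h) : ℕ) : ℝ) ^ (-γ) ≤ s ^ (-γ) * (n : ℝ) ^ (-γ) := by
      rw [← Real.mul_rpow hs0.le hnpos.le]
      exact Real.rpow_le_rpow_of_nonpos (by positivity) h8 (by linarith)
    have h10 : (h : ℝ) ^ (-γ) ≤ d ^ (-γ) * (n : ℝ) ^ (-γ) := by
      rw [← Real.mul_rpow hd0.le hnpos.le]
      exact Real.rpow_le_rpow_of_nonpos (by positivity) hh3 (by linarith)
    have hnγ : 0 < (n : ℝ) ^ (-γ) := Real.rpow_pos_of_pos hnpos _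
    have hbA : b * d ^ (-γ) ≤ (1 - q) / 2 * A := by
      have : 2 * (b * d ^ (-γ)) / (1 - q) ≤ A := le_max_right _ _
      rw [div_le_iff₀ (by linarith)] at this
      linarith
    calc q * (A * ((n - (N + h) : ℕ) : ℝ) ^ (-γ)) + b * (h : ℝ) ^ (-γ)
        ≤ q * (A * (s ^ (-γ) * (n : ℝ) ^ (-γ))) + b * (d ^ (-γ) * (n : ℝ) ^ (-γ)) := by gcongr
      _ = (q * s ^ (-γ) * A + b * d ^ (-γ)) * (n : ℝ) ^ (-γ) := by ring
      _ ≤ ((1 + q) / 2 * A + (1 - q) / 2 * A) * (n : ℝ) ^ (-γ) := by gcongr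
      _ = A * (n : ℝ) ^ (-γ) := by ring

namespace YoungTower

variable {Δ₀ : Type*} [MeasurableSpace Δ₀] (T : YoungTower Δ₀)

/-- One round of the coupling of two tame measures. -/
theorem close_push_step {N : ℕ} {e : ℝ≥0∞} (he : e ≠ ∞)
    (H : ∀ μ, T.Tame μ → μ Set.univ ≠ ∞ → ∀ h, ∃ α r,
      T.push (N + h) μ = (e * μ Set.univ) • T.push h T.ground + α + r ∧
      T.Tame α ∧ r Set.univ ≤ T.bound * μ Set.univ * T.tail h) {n h : ℕ} {a : ℝ≥0∞}
    (hn : ∀ μ ν, T.Tame μ → T.Tame ν → μ Set.univ ≠ ∞ → ν Set.univ = μ Set.univ →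
      Close (μ Set.univ * a) (T.push n μ) (T.push n ν))
    {μ ν : Measure T.Tower} (hμ : T.Tame μ) (hν : T.Tame ν) (hfin : μ Set.univ ≠ ∞)
    (heq : ν Set.univ = μ Set.univ) :
    Close (μ Set.univ * ((1 - e * T.m₀ Set.univ) * a + T.bound * T.tail h))
      (T.push (n + (N + h)) μ) (T.push (n + (N + h)) ν) := by
  obtain ⟨α, r, h1, h2, h3⟩ := H μ hμ hfin h
  obtain ⟨α', r', h1', h2', h3'⟩ := H ν hν (heq ▸ hfin) h
  wlog hle : α Set.univ ≤ α' Set.univ generalizing μ ν α r α' r'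
  · have := this hν hμ (heq ▸ hfin) heq.symm α' r' h1' h2' h3' α r h1 h2 h3 (le_of_not_ge hle)
    rw [heq] at this
    exact this.symm
  rw [heq] at h1' h3'
  set w := μ Set.univ with hw
  have m1 : e * w * T.m₀ Set.univ + α Set.univ + r Set.univ = w := by
    have := congrArg (fun ρ => ρ Set.univ) h1
    simp only [Measure.add_apply, Measure.smul_apply, smul_eq_mul, T.push_univ,
      T.ground_univ] at this
    exact this.symm
  have m2 : e * w * T.m₀ Set.univ + α' Set.univ + r' Set.univ = w := by
    have := congrArg (fun ρ => ρ Set.univ) h1'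
    simp only [Measure.add_apply, Measure.smul_apply, smul_eq_mul, T.push_univ,
      T.ground_univ, heq] at this
    exact this.symm
  have hα'fin : α' Set.univ ≠ ∞ := by
    refine ne_top_of_le_ne_top hfin ?_
    rw [← m2]
    exact le_add_right le_add_self
  have hαfin : α Set.univ ≠ ∞ := ne_top_of_le_ne_top hα'fin hle
  obtain ⟨c, hc1, hc⟩ : ∃ c : ℝ≥0∞, c ≤ 1 ∧ c * α' Set.univ = α Set.univ := by
    by_cases h0 : α' Set.univ = 0
    · exact ⟨1, le_rfl, by rw [h0] at hle ⊢; rw [mul_zero]; exact (nonpos_iff_eq_zero.1 hle).symm⟩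
    · refine ⟨α Set.univ / α' Set.univ, ENNReal.div_le_of_le_mul (by rwa [one_mul]), ?_⟩
      exact ENNReal.div_mul_cancel h0 hα'fin
  have hsplit : α' = c • α' + (1 - c) • α' := by
    rw [← add_smul, add_tsub_cancel_of_le hc1, one_smul]
  have hcα : (c • α') Set.univ = α Set.univ := by rw [Measure.smul_apply, smul_eq_mul, hc]
  obtain ⟨b, s, s', hb1, hb2, hs, hs'⟩ := hn α (c • α') h2 (h2'.smul c) hαfin hcα
  have hα_le : α Set.univ ≤ (1 - e * T.m₀ Set.univ) * w := by
    rw [ENNReal.sub_mul fun _ _ => hfin, one_mul]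
    refine ENNReal.le_sub_of_add_le_left ?_ ?_
    · exact ENNReal.mul_ne_top (ENNReal.mul_ne_top he (measure_ne_top _ _)) hfin
    · calc e * T.m₀ Set.univ * w + α Set.univ = e * w * T.m₀ Set.univ + α Set.univ := by ring
        _ ≤ w := by
          conv_rhs => rw [← m1]
          exact le_self_add
  have hrest : ((1 - c) • α' + r') Set.univ = r Set.univ := by
    have h4 : e * w * T.m₀ Set.univ + α Set.univ ≠ ∞ := by
      refine ne_top_of_le_ne_top hfin ?_
      conv_rhs => rw [← m1]
      exact le_self_add
    refine (ENNReal.add_right_inj h4).1 ?_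
    rw [m1]
    conv_rhs => rw [← m2, hsplit, Measure.add_apply, hcα]
    rw [Measure.add_apply]
    ring
  have hbound : α Set.univ * a + T.bound * w * T.tail h ≤
      w * ((1 - e * T.m₀ Set.univ) * a + T.bound * T.tail h) := by
    calc α Set.univ * a + T.bound * w * T.tail h
        ≤ (1 - e * T.m₀ Set.univ) * w * a + T.bound * w * T.tail h := by gcongr
      _ = _ := by ring
  refine ⟨T.push n ((e * w) • T.push h T.ground) + b, s + T.push n r,
    s' + T.push n ((1 - c) • α' + r'), ?_, ?_, ?_, ?_⟩
  · rw [← T.push_push, h1, T.push_add, T.push_add, hb1]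
    abel
  · rw [← T.push_push, h1', hsplit, T.push_add, T.push_add, T.push_add, hb2, ← hsplit, T.push_add]
    abel
  · rw [Measure.add_apply, T.push_univ]
    exact (add_le_add hs h3).trans hbound
  · rw [Measure.add_apply, T.push_univ, hrest]
    exact (add_le_add hs' h3).trans hbound

theorem tendsto_tail {γ Cτ : ℝ} (hγ : 0 < γ)
    (htail : ∀ h : ℕ, 1 ≤ h → T.tail h ≤ ENNReal.ofReal (Cτ * (h : ℝ) ^ (-γ))) :
    Filter.Tendsto T.tail Filter.atTop (nhds 0) := by
  have h1 : Filter.Tendsto (fun h : ℕ => ENNReal.ofReal (Cτ * (h : ℝ) ^ (-γ))) Filter.atTop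
      (nhds 0) := by
    rw [← ENNReal.ofReal_zero]
    refine ENNReal.tendsto_ofReal ?_
    simpa using ((tendsto_rpow_neg_atTop hγ).comp tendsto_natCast_atTop_atTop).const_mul Cτ
  refine tendsto_of_tendsto_of_tendsto_of_le_of_le' tendsto_const_nhds h1
    (Filter.Eventually.of_forall fun _ => zero_le) ?_
  filter_upwards [Filter.eventually_ge_atTop 1] with h hh using htail h hh

/-- Tame measures of the same mass approach each other at a polynomial rate. -/
theorem exists_close_push {γ Cτ : ℝ} (hγ : 0 < γ) (hC : 0 ≤ Cτ)
    (htail : ∀ h : ℕ, 1 ≤ h → T.tail h ≤ ENNReal.ofReal (Cτ * (h : ℝ) ^ (-γ))) :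
    ∃ A : ℝ, 0 < A ∧ ∀ n : ℕ, 1 ≤ n → ∀ μ ν, T.Tame μ → T.Tame ν → μ Set.univ ≠ ∞ →
      ν Set.univ = μ Set.univ →
      Close (μ Set.univ * ENNReal.ofReal (A * (n : ℝ) ^ (-γ))) (T.push n μ) (T.push n ν) := by
  have ht0 := T.tendsto_tail hγ htail
  obtain ⟨N, ε, hε, H⟩ := T.exists_coupling_step ht0
  set M := (T.m₀ Set.univ).toReal with hM
  have hM0 : 0 < M := ENNReal.toReal_pos T.m₀_univ_ne_zero (measure_ne_top _ _)
  set q := max (1 - ε * M) 0 with hq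
  have hq0 : 0 ≤ q := le_max_right _ _
  have hq1 : q < 1 := max_lt (by nlinarith) one_pos
  set b := T.bound.toReal * Cτ with hb
  have hb0 : 0 ≤ b := mul_nonneg ENNReal.toReal_nonneg hC
  obtain ⟨A, hA, n₀, hsmall, hlarge⟩ := exists_polynomial_recursion hq0 hq1 hγ hb0 N
  refine ⟨A, hA, fun n => ?_⟩
  induction n using Nat.strong_induction_on with
  | _ n ih =>
    intro hn μ ν hμ hν hfin heq
    rcases le_or_gt n n₀ with hle | hlt
    · refine ⟨0, T.push n μ, T.push n ν, (zero_add _).symm, (zero_add _).symm, ?_, ?_⟩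
      all_goals
        rw [T.push_univ]
        try rw [heq]
        refine le_mul_of_one_le_right zero_le ?_
        rw [← ENNReal.ofReal_one]
        exact ENNReal.ofReal_le_ofReal (hsmall n hn hle)
    · obtain ⟨h, n', hh, hn', hn'n, rfl, hrec⟩ := hlarge n hlt
      refine (T.close_push_step ENNReal.ofReal_ne_top H (h := h) (ih n' hn'n hn') hμ hν hfin
        heq).mono ?_
      gcongr
      have hqe : 1 - ENNReal.ofReal ε * T.m₀ Set.univ ≤ ENNReal.ofReal q := by
        rw [← ENNReal.ofReal_toReal (measure_ne_top T.m₀ Set.univ), ← ENNReal.ofReal_mul hε.le,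
          ← ENNReal.ofReal_one, ← ENNReal.ofReal_sub _ (mul_pos hε hM0).le]
        exact ENNReal.ofReal_le_ofReal (le_max_left _ _)
      calc (1 - ENNReal.ofReal ε * T.m₀ Set.univ) * ENNReal.ofReal (A * (n' : ℝ) ^ (-γ)) +
            T.bound * T.tail h
          ≤ ENNReal.ofReal q * ENNReal.ofReal (A * (n' : ℝ) ^ (-γ)) +
            ENNReal.ofReal T.bound.toReal * ENNReal.ofReal (Cτ * (h : ℝ) ^ (-γ)) := by
            rw [ENNReal.ofReal_toReal T.bound_ne_top]
            gcongr
            exact htail h hh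
        _ = ENNReal.ofReal (q * (A * (n' : ℝ) ^ (-γ)) + b * (h : ℝ) ^ (-γ)) := by
            rw [← ENNReal.ofReal_mul hq0, ← ENNReal.ofReal_mul ENNReal.toReal_nonneg,
              ← ENNReal.ofReal_add (by positivity) (by positivity), hb, mul_assoc]
        _ ≤ _ := ENNReal.ofReal_le_ofReal hrec

end YoungTower

theorem tvDist_le_of_forall {X : Type*} [MeasurableSpace X] {μ ν : Measure X} [IsFiniteMeasure μ]
    [IsFiniteMeasure ν] {ε : ℝ} (h : ∀ A, MeasurableSet A → |μ.real A - ν.real A| ≤ ε) :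
    tvDist μ ν ≤ 2 * ε := by
  set s := μ.toSignedMeasure - ν.toSignedMeasure with hs
  have hsA : ∀ A, MeasurableSet A → s A = μ.real A - ν.real A := fun A hA => by
    rw [hs, sub_apply, Measure.toSignedMeasure_apply_measurable hA,
      Measure.toSignedMeasure_apply_measurable hA]
  obtain ⟨i, hi, h0, h1, hp, hn⟩ := s.toJordanDecomposition_spec
  unfold tvDist SignedMeasure.totalVariation
  rw [← hs, hp, hn, Measure.add_apply, SignedMeasure.toMeasureOfZeroLE_apply _ _ _ .univ,
    SignedMeasure.toMeasureOfLEZero_apply _ _ _ .univ, ENNReal.toReal_add (by simp) (by simp),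
    ENNReal.coe_toReal, ENNReal.coe_toReal]
  simp only [Set.inter_univ, NNReal.coe_mk]
  rw [hsA i hi, hsA _ hi.compl]
  have h2 := (abs_le.1 (h i hi)).2
  have h3 := (abs_le.1 (h _ hi.compl)).1
  linarith

theorem exists_setwise_limit {X : Type*} [MeasurableSpace X] {m : Measure X} [IsFiniteMeasure m]
    {K : ℝ≥0∞} (hK : K ≠ ∞) {μ : ℕ → Measure X} (hle : ∀ n, μ n ≤ K • m)
    (hc : ∀ A, MeasurableSet A → CauchySeq fun n => (μ n).real A) :
    ∃ ν : Measure X, ν ≤ K • m ∧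
      ∀ A, MeasurableSet A → Filter.Tendsto (fun n => (μ n).real A) Filter.atTop
        (nhds (ν.real A)) := by
  have hKm : IsFiniteMeasure (K • m) := Measure.smul_finite m hK
  have hfin : ∀ n, IsFiniteMeasure (μ n) := fun n => isFiniteMeasure_of_le _ (hle n)
  choose L hL using fun A hA => cauchySeq_tendsto_of_complete (hc A hA)
  have hL0 : ∀ A hA, 0 ≤ L A hA := fun A hA =>
    ge_of_tendsto' (hL A hA) fun n => measureReal_nonneg
  have hreal : ∀ n A, (μ n).real A ≤ (K • m).real A := fun n A =>
    ENNReal.toReal_mono (measure_ne_top _ _) (hle n A)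
  have hLle : ∀ A hA, L A hA ≤ (K • m).real A := fun A hA =>
    le_of_tendsto' (hL A hA) fun n => hreal n A
  have hiUnion : ∀ ⦃f : ℕ → Set X⦄ (h : ∀ i, MeasurableSet (f i)),
      Pairwise (Function.onFun Disjoint f) →
      ENNReal.ofReal (L (⋃ i, f i) (MeasurableSet.iUnion h)) =
        ∑' i, ENNReal.ofReal (L (f i) (h i)) := by
    intro f h hd
    have hsum : Summable fun i => (K • m).real (f i) :=
      ENNReal.summable_toReal (by
        rw [← measure_iUnion hd h]
        exact measure_ne_top _ _)
    have h1 := tendsto_tsum_of_dominated_convergence (𝓕 := Filter.atTop)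
      (f := fun n i => (μ n).real (f i)) hsum (fun i => hL (f i) (h i))
      (Filter.Eventually.of_forall fun n i => by
        rw [Real.norm_of_nonneg measureReal_nonneg]
        exact hreal n (f i))
    have h2 : ∀ n, ∑' i, (μ n).real (f i) = (μ n).real (⋃ i, f i) := fun n => by
      rw [measureReal_def, measure_iUnion hd h, ENNReal.tsum_toReal_eq]
      · rfl
      · exact fun i => measure_ne_top _ _
    simp_rw [h2] at h1
    rw [tendsto_nhds_unique (hL _ (MeasurableSet.iUnion h)) h1]
    exact ENNReal.ofReal_tsum_of_nonneg (fun i => hL0 _ _)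
      (hsum.of_nonneg_of_le (fun i => hL0 _ _) fun i => hLle _ _)
  refine ⟨Measure.ofMeasurable (fun A hA => ENNReal.ofReal (L A hA)) ?_ hiUnion,
    Measure.le_iff.2 fun A hA => ?_, fun A hA => ?_⟩
  · have : L ∅ MeasurableSet.empty = 0 :=
      tendsto_nhds_unique (hL ∅ MeasurableSet.empty) (by simp)
    rw [this, ENNReal.ofReal_zero]
  · rw [Measure.ofMeasurable_apply A hA, ← ENNReal.ofReal_toReal (measure_ne_top (K • m) A)]
    exact ENNReal.ofReal_le_ofReal (hLle A hA)
  · rw [measureReal_def, Measure.ofMeasurable_apply A hA, ENNReal.toReal_ofReal (hL0 A hA)]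
    exact hL A hA

theorem Close.abs_real_le {X : Type*} [MeasurableSpace X] {ε : ℝ} {μ ν : Measure X}
    [IsFiniteMeasure μ] [IsFiniteMeasure ν] (hε : 0 ≤ ε) (h : Close (ENNReal.ofReal ε) μ ν)
    (A : Set X) : |μ.real A - ν.real A| ≤ ε := by
  have key : ∀ {μ ν : Measure X} [IsFiniteMeasure μ] [IsFiniteMeasure ν],
      Close (ENNReal.ofReal ε) μ ν → μ.real A ≤ ν.real A + ε := by
    intro μ ν _ _ h
    have := ENNReal.toReal_mono (by simp) (h.apply_le A)
    rwa [ENNReal.toReal_add (measure_ne_top _ _) (by simp), ENNReal.toReal_ofReal hε] at this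
  rw [abs_le]
  constructor
  · linarith [key h.symm]
  · linarith [key h]

theorem rpow_telescope {γ : ℝ} (hγ : 0 < γ) {n : ℕ} (hn : 1 ≤ n) :
    (n : ℝ) ^ (-(γ + 1)) ≤ 2 ^ (γ + 1) / γ * ((n : ℝ) ^ (-γ) - ((n + 1 : ℕ) : ℝ) ^ (-γ)) := by
  have hn0 : (0 : ℝ) < n := by exact_mod_cast hn
  have hn1 : (1 : ℝ) ≤ n := by exact_mod_cast hn
  have hs : ((n + 1 : ℕ) : ℝ) = n + 1 := by push_cast; ring
  rw [hs]
  set y : ℝ := n / (n + 1) with hy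
  have hy0 : 0 < y := by positivity
  have h1 : 1 + γ * (n + 1 : ℝ)⁻¹ ≤ y ^ (-γ) := by
    have h2 : Real.log y ≤ y - 1 := Real.log_le_sub_one_of_pos hy0
    have h3 : y - 1 = -(n + 1 : ℝ)⁻¹ := by rw [hy]; field_simp; ring
    rw [Real.rpow_def_of_pos hy0]
    have h4 := Real.add_one_le_exp (Real.log y * -γ)
    nlinarith
  have h5 : (n : ℝ) = y * (n + 1) := by rw [hy]; field_simp
  have h6 : (n : ℝ) ^ (-γ) = y ^ (-γ) * (n + 1 : ℝ) ^ (-γ) := by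
    rw [← Real.mul_rpow hy0.le (by positivity), ← h5]
  have h7 : (n + 1 : ℝ) ^ (-(γ + 1)) = (n + 1 : ℝ) ^ (-γ) * (n + 1 : ℝ)⁻¹ := by
    rw [neg_add, Real.rpow_add (by positivity), Real.rpow_neg_one]
  have h8 : γ * (n + 1 : ℝ) ^ (-(γ + 1)) ≤ (n : ℝ) ^ (-γ) - (n + 1 : ℝ) ^ (-γ) := by
    have hp : 0 < (n + 1 : ℝ) ^ (-γ) := by positivity
    rw [h6, h7]
    nlinarith
  have h9 : (n : ℝ) ^ (-(γ + 1)) ≤ 2 ^ (γ + 1) * (n + 1 : ℝ) ^ (-(γ + 1)) := by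
    have h10 : (2 * n : ℝ) ^ (-(γ + 1)) ≤ (n + 1 : ℝ) ^ (-(γ + 1)) :=
      Real.rpow_le_rpow_of_nonpos (by positivity) (by linarith) (by linarith)
    rw [Real.mul_rpow (by norm_num) hn0.le] at h10
    calc (n : ℝ) ^ (-(γ + 1))
        = 2 ^ (γ + 1) * (2 ^ (-(γ + 1)) * (n : ℝ) ^ (-(γ + 1))) := by
          rw [← mul_assoc, ← Real.rpow_add (by norm_num), add_neg_cancel, Real.rpow_zero, one_mul]
      _ ≤ _ := by gcongr
  calc (n : ℝ) ^ (-(γ + 1)) ≤ 2 ^ (γ + 1) * (n + 1 : ℝ) ^ (-(γ + 1)) := h9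
    _ = 2 ^ (γ + 1) / γ * (γ * (n + 1 : ℝ) ^ (-(γ + 1))) := by field_simp
    _ ≤ _ := by gcongr

theorem sum_rpow_shift_le {γ : ℝ} (hγ : 0 < γ) {h : ℕ} (hh : 1 ≤ h) (L : ℕ) :
    ∑ l ∈ Finset.range L, ((l + h : ℕ) : ℝ) ^ (-(γ + 1)) ≤ 2 ^ (γ + 1) / γ * (h : ℝ) ^ (-γ) := by
  have h1 : ∑ l ∈ Finset.range L, ((l + h : ℕ) : ℝ) ^ (-(γ + 1)) ≤
      2 ^ (γ + 1) / γ * ((h : ℝ) ^ (-γ) - ((L + h : ℕ) : ℝ) ^ (-γ)) := by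
    induction L with
    | zero => simp
    | succ L ih =>
      rw [Finset.sum_range_succ]
      have := rpow_telescope hγ (n := L + h) (by omega)
      rw [show L + 1 + h = L + h + 1 by omega]
      linarith
  refine h1.trans ?_
  gcongr
  have : 0 ≤ ((L + h : ℕ) : ℝ) ^ (-γ) := by positivity
  linarith

namespace YoungTower

variable {Δ₀ : Type*} [MeasurableSpace Δ₀] (T : YoungTower Δ₀)

theorem tail_eq (h : ℕ) : T.tail h = ∑' l, T.m₀ {x | l + h < T.R x} := by
  rw [tail, T.towerMeasure_apply (T.measurableSet_lt_hit h)]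
  refine tsum_congr fun l => ?_
  congr 1
  ext x
  constructor
  · rintro ⟨h1, h2⟩
    have h3 : h < T.R x - l := h2
    change l + h < T.R x
    omega
  · intro h1
    have h1' : l + h < T.R x := h1
    refine ⟨by omega, ?_⟩
    change h < T.R x - l
    omega

theorem tail_zero : T.tail 0 = T.towerMeasure Set.univ := by
  rw [tail]
  congr 1
  exact Set.eq_univ_of_forall fun p => T.hit_pos p

theorem tail_zero_eq : T.tail 0 = T.m₀ {x | 0 < T.R x} + T.tail 1 := by
  rw [tail_eq, tail_eq, tsum_eq_zero_add' ENNReal.summable]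

theorem tail_le_of_polynomial {ζ C : ℝ} (hζ : 1 < ζ) (hC : 0 < C)
    (htail : ∀ n : ℕ, 1 ≤ n → (T.m₀ {x | n < T.R x}).toReal ≤ C / (n : ℝ) ^ ζ) (h : ℕ)
    (hh : 1 ≤ h) :
    T.tail h ≤ ENNReal.ofReal (C * (2 ^ ζ / (ζ - 1)) * (h : ℝ) ^ (-(ζ - 1))) := by
  rw [tail_eq]
  refine ENNReal.tsum_le_of_sum_range_le fun L => ?_
  have h1 := sum_rpow_shift_le (γ := ζ - 1) (by linarith) hh L
  rw [sub_add_cancel] at h1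
  calc ∑ l ∈ Finset.range L, T.m₀ {x | l + h < T.R x}
      ≤ ∑ l ∈ Finset.range L, ENNReal.ofReal (C * ((l + h : ℕ) : ℝ) ^ (-ζ)) := by
        refine Finset.sum_le_sum fun l _ => ?_
        rw [← ENNReal.ofReal_toReal (measure_ne_top T.m₀ _)]
        refine ENNReal.ofReal_le_ofReal ((htail (l + h) (by omega)).trans_eq ?_)
        rw [Real.rpow_neg (Nat.cast_nonneg _), div_eq_mul_inv]
    _ = ENNReal.ofReal (C * ∑ l ∈ Finset.range L, ((l + h : ℕ) : ℝ) ^ (-ζ)) := by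
        rw [Finset.mul_sum, ENNReal.ofReal_sum_of_nonneg fun l _ => by positivity]
    _ ≤ _ := by
        refine ENNReal.ofReal_le_ofReal ?_
        rw [mul_assoc]
        gcongr

/-- The normalized reference measure of the base. -/
def unitGround : Measure T.Tower := (T.m₀ Set.univ)⁻¹ • T.ground

theorem tame_unitGround : T.Tame T.unitGround := T.tame_ground.smul _

theorem unitGround_univ : T.unitGround Set.univ = 1 := by
  rw [unitGround, Measure.smul_apply, smul_eq_mul, T.ground_univ,
    ENNReal.inv_mul_cancel T.m₀_univ_ne_zero (measure_ne_top _ _)]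

instance : IsProbabilityMeasure T.unitGround := ⟨T.unitGround_univ⟩

/-- The invariant probability measure, as the limit of the push-forwards of tame measures. -/
theorem exists_equilibrium [IsFiniteMeasure T.towerMeasure] {γ Cτ : ℝ} (hγ : 0 < γ) (hC : 0 ≤ Cτ)
    (htail : ∀ h : ℕ, 1 ≤ h → T.tail h ≤ ENNReal.ofReal (Cτ * (h : ℝ) ^ (-γ))) :
    ∃ ν : Measure T.Tower, IsProbabilityMeasure ν ∧ T.IsInvariantEquiv ν ∧
      ∃ K : ℝ, 0 < K ∧ ∀ μ, T.Tame μ → μ Set.univ ≠ ∞ → ∀ n : ℕ, 1 ≤ n → ∀ A, MeasurableSet A →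
        |(T.push n μ).real A - μ.real Set.univ * ν.real A| ≤
          μ.real Set.univ * (K * (n : ℝ) ^ (-γ)) := by
  obtain ⟨K, hK, hclose⟩ := T.exists_close_push hγ hC htail
  have hrate0 : Filter.Tendsto (fun h : ℕ => (h : ℝ) ^ (-γ)) Filter.atTop (nhds 0) :=
    (tendsto_rpow_neg_atTop hγ).comp tendsto_natCast_atTop_atTop
  have ht0 := T.tendsto_tail hγ htail
  have hdiff : ∀ μ, T.Tame μ → μ Set.univ ≠ ∞ → ∀ n : ℕ, 1 ≤ n → ∀ k A,
      |(T.push n μ).real A - μ.real Set.univ * (T.push (n + k) T.unitGround).real A| ≤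
        μ.real Set.univ * (K * (n : ℝ) ^ (-γ)) := by
    intro μ hμ hfin n hn k A
    have : IsFiniteMeasure μ := ⟨lt_top_iff_ne_top.2 hfin⟩
    have : IsFiniteMeasure (μ Set.univ • T.push k T.unitGround) := Measure.smul_finite _ hfin
    have h1 := hclose n hn μ (μ Set.univ • T.push k T.unitGround) hμ
      ((T.tame_unitGround.push k).smul _) hfin (by
        rw [Measure.smul_apply, T.push_univ, T.unitGround_univ, smul_eq_mul, mul_one])
    rw [← ENNReal.ofReal_toReal hfin, ← ENNReal.ofReal_mul ENNReal.toReal_nonneg,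
      ENNReal.ofReal_toReal hfin] at h1
    have h2 := h1.abs_real_le (by positivity) A
    rwa [T.push_smul, T.push_push, measureReal_ennreal_smul_apply] at h2
  have hone : T.unitGround.real Set.univ = 1 := by simp
  have hcauchy : ∀ A, MeasurableSet A → CauchySeq fun n =>
      (T.push (n + 1) T.unitGround).real A := by
    intro A _
    refine cauchySeq_of_le_tendsto_0' (fun n : ℕ => K * ((n + 1 : ℕ) : ℝ) ^ (-γ)) ?_ ?_
    · intro n k hnk
      have := hdiff T.unitGround T.tame_unitGround (measure_ne_top _ _) (n + 1) (by omega)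
        (k - n) A
      rw [hone, one_mul, one_mul, show n + 1 + (k - n) = k + 1 by omega] at this
      exact this
    · have := (hrate0.comp (Filter.tendsto_add_atTop_nat 1)).const_mul K
      simpa using this
  obtain ⟨ν, hνle, hν⟩ := exists_setwise_limit (m := T.towerMeasure) T.bound_ne_top
    (μ := fun n => T.push (n + 1) T.unitGround) (fun n => by
      have := (T.tame_unitGround.push (n + 1)).le
      rwa [T.push_univ, T.unitGround_univ, mul_one] at this) hcauchy
  have hνfin : IsFiniteMeasure ν := by
    have : IsFiniteMeasure (T.bound • T.towerMeasure) := Measure.smul_finite _ T.bound_ne_top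
    exact isFiniteMeasure_of_le _ hνle
  have hν' : ∀ A, MeasurableSet A → Filter.Tendsto (fun n => (T.push n T.unitGround).real A)
      Filter.atTop (nhds (ν.real A)) := fun A hA => (Filter.tendsto_add_atTop_iff_nat 1).1 (hν A hA)
  have hprob : IsProbabilityMeasure ν := by
    constructor
    have h1 := hν Set.univ MeasurableSet.univ
    simp_rw [measureReal_def, T.push_univ, T.unitGround_univ] at h1
    have h2 := tendsto_nhds_unique h1 tendsto_const_nhds
    rw [← ENNReal.ofReal_toReal (measure_ne_top ν Set.univ), h2]
    simp
  have hinv : MeasurePreserving T.towerMap ν ν := by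
    refine ⟨T.measurable_towerMap, Measure.ext fun A hA => ?_⟩
    rw [Measure.map_apply T.measurable_towerMap hA]
    have h1 := hν' _ (T.measurable_towerMap hA)
    have h2 : ∀ n, (T.push n T.unitGround).real (T.towerMap ⁻¹' A) =
        (T.push (n + 1) T.unitGround).real A := fun n => by
      rw [add_comm, ← T.push_push, measureReal_def, measureReal_def, T.push_apply 1 _ hA]
      rfl
    simp_rw [h2] at h1
    have h3 := tendsto_nhds_unique h1 (hν A hA)
    exact (ENNReal.toReal_eq_toReal_iff' (measure_ne_top _ _) (measure_ne_top _ _)).1 h3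
  refine ⟨ν, hprob, ⟨hinv, Measure.absolutelyContinuous_of_le_smul hνle, ?_⟩, K, hK, ?_⟩
  · obtain ⟨N, δ, hδ, hlow⟩ := T.exists_ground_le_push ht0
    have hground : ∀ A, MeasurableSet A → ν A = 0 → T.ground A = 0 := by
      intro A hA h0
      have h1 : ∀ n, δ * T.ground A ≤ T.push (N + n) T.unitGround A := fun n => by
        have := hlow (T.push n T.unitGround) (T.tame_unitGround.push n) (measure_ne_top _ _) A
        rwa [T.push_push, T.push_univ, T.unitGround_univ, mul_one] at this
      have h2 : (δ * T.ground A).toReal ≤ ν.real A := by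
        refine ge_of_tendsto' ((Filter.tendsto_add_atTop_iff_nat N).2 (hν' A hA)) fun n => ?_
        rw [add_comm n N]
        exact ENNReal.toReal_mono (measure_ne_top _ _) (h1 n)
      rw [measureReal_def, h0, ENNReal.toReal_zero] at h2
      have h3 := le_antisymm h2 ENNReal.toReal_nonneg
      rw [ENNReal.toReal_eq_zero_iff] at h3
      have h4 : δ * T.ground A = 0 :=
        h3.resolve_right (ne_top_of_le_ne_top (measure_ne_top _ _) (h1 0))
      exact (mul_eq_zero.1 h4).resolve_left hδ
    refine Measure.AbsolutelyContinuous.mk fun A hA h0 => ?_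
    rw [T.towerMeasure_apply hA, ENNReal.tsum_eq_zero]
    intro l
    have h1 := hground (T.towerMap^[l] ⁻¹' A) (T.measurable_iterate l hA) (by
      rw [(hinv.iterate l).measure_preimage hA.nullMeasurableSet, h0])
    rw [ground, Measure.map_apply T.measurable_base (T.measurable_iterate l hA)] at h1
    refine measure_mono_null ?_ h1
    rintro x ⟨hx, hxA⟩
    have h2 := T.iterate_of_lt_hit (n := l) (p := T.base x) hx
    change T.towerMap^[l] (T.base x) ∈ A
    rwa [show T.towerMap^[l] (T.base x) = ⟨(x, l), hx⟩ from
      Subtype.ext (h2.trans (by simp [base]))]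
  · intro μ hμ hfin n hn A hA
    have h1 : Filter.Tendsto (fun k => |(T.push n μ).real A -
        μ.real Set.univ * (T.push (n + k) T.unitGround).real A|) Filter.atTop
        (nhds |(T.push n μ).real A - μ.real Set.univ * ν.real A|) := by
      refine (tendsto_const_nhds.sub (Filter.Tendsto.const_mul _ ?_)).abs
      have := (Filter.tendsto_add_atTop_iff_nat n).2 (hν' A hA)
      simpa [add_comm] using this
    exact le_of_tendsto' h1 fun k => hdiff μ hμ hfin n hn k A

end YoungTower

namespace YoungTower

variable {Δ₀ : Type*} [MeasurableSpace Δ₀] (T : YoungTower Δ₀)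

open Classical in
/-- The label of the partition element of a point of the base, shifted by one; it is `0` for points
outside the partition elements. -/
def symb (x : Δ₀) : ℕ := if h : ∃ i, i ∈ T.I ∧ x ∈ T.Λ i then Nat.find h + 1 else 0

theorem symb_eq_succ_iff {x : Δ₀} {i : ℕ} : T.symb x = i + 1 ↔ i ∈ T.I ∧ x ∈ T.Λ i := by
  classical
  unfold symb
  split_ifs with h
  · have hf := Nat.find_spec h
    constructor
    · intro h'
      rwa [show i = Nat.find h by omega]
    · intro hi
      have : Nat.find h = i := by
        by_contra hne
        exact Set.disjoint_left.1 (T.Λ_disj hf.1 hi.1 hne) hf.2 hi.2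
      omega
  · exact ⟨fun h' => h'.elim, fun hi => absurd ⟨i, hi⟩ h⟩

theorem measurable_symb : Measurable T.symb := by
  have hsucc : ∀ i, MeasurableSet (T.symb ⁻¹' {i + 1}) := fun i => by
    by_cases hi : i ∈ T.I
    · have : T.symb ⁻¹' {i + 1} = T.Λ i := by
        ext x
        exact T.symb_eq_succ_iff.trans ⟨fun h => h.2, fun h => ⟨hi, h⟩⟩
      rw [this]
      exact T.Λ_meas i hi
    · have : T.symb ⁻¹' {i + 1} = ∅ :=
        Set.eq_empty_of_forall_notMem fun x hx => hi (T.symb_eq_succ_iff.1 hx).1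
      rw [this]
      exact MeasurableSet.empty
  refine measurable_to_countable' fun n => ?_
  cases n with
  | succ i => exact hsucc i
  | zero =>
    have : T.symb ⁻¹' {0} = (⋃ i, T.symb ⁻¹' {i + 1})ᶜ := by
      ext x
      simp only [Set.mem_preimage, Set.mem_singleton_iff, Set.mem_compl_iff, Set.mem_iUnion,
        not_exists]
      exact ⟨fun h i => by omega, fun h => by
        by_contra h0
        exact h (T.symb x - 1) (by omega)⟩
    rw [this]
    exact (MeasurableSet.iUnion hsucc).compl

/-- The level of a point of the tower and the first `k` symbols of its itinerary. -/
def code (k : ℕ) (p : T.Tower) : ℕ × (Fin k → ℕ) :=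
  (p.1.2, fun j => T.symb (T.FR^[j] p.1.1))

theorem measurable_code (k : ℕ) : Measurable (T.code k) :=
  T.measurable_level.prodMk (measurable_pi_lambda _ fun j =>
    T.measurable_symb.comp ((T.FR_meas.iterate j).comp T.measurable_point))

theorem code_eq_of_le_sepTower {k : ℕ} (hk : 1 ≤ k) {p q : T.Tower}
    (h : (k : ℕ∞) ≤ T.sepTower p q) : T.code k p = T.code k q := by
  rw [T.le_sepTower_iff hk, T.le_sepTime_iff] at h
  refine Prod.ext h.1 (funext fun j => ?_)
  obtain ⟨i, hi, hp, hq⟩ := h.2 j j.2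
  exact (T.symb_eq_succ_iff.2 ⟨hi, hp⟩).trans (T.symb_eq_succ_iff.2 ⟨hi, hq⟩).symm

theorem le_sepTower_of_code_eq {k : ℕ} (hk : 1 ≤ k) {p q : T.Tower}
    (hp : ∀ j, T.symb (T.FR^[j] p.1.1) ≠ 0) (h : T.code k q = T.code k p) :
    (k : ℕ∞) ≤ T.sepTower p q := by
  rw [T.le_sepTower_iff hk, T.le_sepTime_iff]
  refine ⟨(congrArg Prod.fst h).symm, fun j hj => ?_⟩
  have h1 : T.symb (T.FR^[j] q.1.1) = T.symb (T.FR^[j] p.1.1) :=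
    congrFun (congrArg Prod.snd h) ⟨j, hj⟩
  obtain ⟨i, hi⟩ := Nat.exists_eq_succ_of_ne_zero (hp j)
  have h2 := T.symb_eq_succ_iff.1 hi
  exact ⟨i, h2.1, h2.2, (T.symb_eq_succ_iff.1 (h1.trans hi)).2⟩

theorem quasiMeasurePreserving_FR : Measure.QuasiMeasurePreserving T.FR T.m₀ T.m₀ := by
  refine ⟨T.FR_meas, ?_⟩
  have h1 : T.m₀.map T.FR = Measure.sum fun t => T.arrive t T.ground := by
    have : T.m₀.map T.FR = T.ground.map T.land := by
      rw [ground, Measure.map_map T.measurable_land T.measurable_base]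
      rfl
    rw [this]
    conv_lhs => rw [T.eq_sum_restrict_hit T.ground,
      Measure.map_sum T.measurable_land.aemeasurable]
    rfl
  rw [h1]
  refine Measure.absolutelyContinuous_sum_left fun t => ?_
  exact Measure.absolutelyContinuous_of_le_smul
    (T.tame_ground.reg.arrive' T.tame_ground.absolutelyContinuous t).le

theorem ae_symb_ne_zero : ∀ᵐ x ∂T.m₀, ∀ j, T.symb (T.FR^[j] x) ≠ 0 := by
  have h0 : ∀ᵐ x ∂T.m₀, T.symb x ≠ 0 := by
    have : T.m₀ (⋃ i ∈ T.I, T.Λ i)ᶜ = 0 := by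
      rw [Set.compl_eq_univ_sdiff]
      exact T.Λ_full
    filter_upwards [compl_mem_ae_iff.2 this] with x hx
    rw [compl_compl] at hx
    obtain ⟨i, hi, hxi⟩ := Set.mem_iUnion₂.1 hx
    rw [T.symb_eq_succ_iff.2 ⟨hi, hxi⟩]
    exact Nat.succ_ne_zero i
  rw [ae_all_iff]
  exact fun j => (T.quasiMeasurePreserving_FR.iterate j).ae h0

theorem ae_tower_of_ae {P : Δ₀ → Prop} (h : ∀ᵐ x ∂T.m₀, P x) :
    ∀ᵐ p ∂T.towerMeasure, P p.1.1 := by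
  obtain ⟨s, hs, hsm, hs0⟩ := exists_measurable_superset_of_null (ae_iff.1 h)
  have hm : MeasurableSet ((fun p : T.Tower => p.1.1) ⁻¹' s) := T.measurable_point hsm
  refine measure_mono_null (t := (fun p : T.Tower => p.1.1) ⁻¹' s) (fun p hp => hs hp) ?_
  rw [T.towerMeasure_apply hm, ENNReal.tsum_eq_zero]
  exact fun l => measure_mono_null (fun x hx => hx.2) hs0

theorem ae_tower_symb_ne_zero :
    ∀ᵐ p ∂T.towerMeasure, ∀ j, T.symb (T.FR^[j] p.1.1) ≠ 0 :=
  T.ae_tower_of_ae T.ae_symb_ne_zero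

/-- The infimum of a function over the cylinders of length `k` (and `0` if `k = 0`). -/
def cylInf (f : T.Tower → ℝ≥0∞) : ℕ → T.Tower → ℝ≥0∞
  | 0, _ => 0
  | k + 1, p => ⨅ (q : T.Tower) (_ : T.code (k + 1) q = T.code (k + 1) p), f q

variable {T} {f : T.Tower → ℝ≥0∞}

theorem cylInf_le (k : ℕ) (p : T.Tower) : T.cylInf f k p ≤ f p := by
  cases k with
  | zero => exact zero_le
  | succ k => exact iInf₂_le (f := fun q (_ : T.code (k + 1) q = T.code (k + 1) p) => f q) p rfl

theorem cylInf_le_succ (k : ℕ) (p : T.Tower) : T.cylInf f k p ≤ T.cylInf f (k + 1) p := by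
  cases k with
  | zero => exact zero_le
  | succ k =>
    refine le_iInf₂ fun q hq => ?_
    refine iInf₂_le (f := fun q (_ : T.code (k + 1) q = T.code (k + 1) p) => f q) q ?_
    refine Prod.ext (congrArg (fun c => c.1) hq) (funext fun j => ?_)
    exact congrFun (congrArg (fun c => c.2) hq) ⟨j, by omega⟩

theorem measurable_cylInf (k : ℕ) : Measurable (T.cylInf f k) := by
  cases k with
  | zero => exact measurable_const
  | succ k =>
    exact (measurable_of_countable fun c : ℕ × (Fin (k + 1) → ℕ) =>
      ⨅ (q : T.Tower) (_ : T.code (k + 1) q = c), f q).comp (T.measurable_code (k + 1))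

theorem cylInf_eq {k : ℕ} {p q : T.Tower} (h : ((k + 1 : ℕ) : ℕ∞) ≤ T.sepTower p q) :
    T.cylInf f (k + 1) p = T.cylInf f (k + 1) q ∧ T.cylInf f k p = T.cylInf f k q := by
  constructor
  · simp only [cylInf, T.code_eq_of_le_sepTower (by omega) h]
  · cases k with
    | zero => rfl
    | succ k =>
      have hle : ((k + 1 : ℕ) : ℕ∞) ≤ T.sepTower p q := le_trans (by exact_mod_cast (by omega)) h
      simp only [cylInf, T.code_eq_of_le_sepTower (by omega) hle]

/-- A measure whose density is constant on cylinders of length `j` is regular at their scale. -/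
theorem treg_withDensity {K : ℝ} (hK : 0 ≤ K) {j : ℕ} {g : T.Tower → ℝ≥0∞}
    (hg : ∀ p q, (j : ℕ∞) ≤ T.sepTower p q → g p = g q) :
    T.TReg K j (T.towerMeasure.withDensity g) := by
  intro k hj hk A A' hA hA' hs
  have hs' : ∀ p ∈ A, ∀ q ∈ A', g p = g q := fun p hp q hq =>
    hg p q (le_trans (by exact_mod_cast hj) (hs p hp q hq))
  obtain rfl | ⟨p, hp⟩ := A.eq_empty_or_nonempty
  · simp
  obtain rfl | ⟨q, hq⟩ := A'.eq_empty_or_nonempty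
  · simp
  have h1 : T.towerMeasure.withDensity g A = g q * T.towerMeasure A := by
    rw [withDensity_apply _ hA, setLIntegral_congr_fun hA fun p' hp' => hs' p' hp' q hq,
      setLIntegral_const]
  have h2 : T.towerMeasure.withDensity g A' = g q * T.towerMeasure A' := by
    rw [withDensity_apply _ hA', setLIntegral_congr_fun hA' fun q' hq' =>
      (hs' p hp q' hq').symm.trans (hs' p hp q hq), setLIntegral_const]
  rw [h1, h2]
  calc g q * T.towerMeasure A * T.towerMeasure A'
      = g q * T.towerMeasure A' * T.towerMeasure A := by ring
    _ ≤ _ := le_mul_of_one_le_left zero_le (T.one_le_dist hK k)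

theorem gpow_le {θ : ℝ} (hθ : 0 < θ) {s : ℕ∞} {k : ℕ} (hk : 1 ≤ k) (h : (k : ℕ∞) ≤ s) :
    gpow θ s ≤ (k : ℝ) ^ (-θ) := by
  have hk0 : (0 : ℝ) < k := by exact_mod_cast hk
  unfold gpow
  split_ifs with hs
  · positivity
  · lift s to ℕ using hs
    have hks : k ≤ s := by exact_mod_cast h
    have hks' : (k : ℝ) ≤ s := by exact_mod_cast hks
    rw [one_div, ← Real.rpow_neg (by positivity)]
    exact Real.rpow_le_rpow_of_nonpos hk0 (hks'.trans (le_max_left _ _)) (by linarith)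

/-- The infimum over cylinders of length `k` approximates a density in `𝒢_θ⁺`. -/
theorem MemGPlus.sub_cylInf_le {θ D : ℝ} (hθ : 0 < θ) (hD : 0 < D) {φ : T.Tower → ℝ}
    (hφ : T.MemGPlus θ D φ) {k : ℕ} (hk : 1 ≤ k) :
    ∀ᵐ p ∂T.towerMeasure, ENNReal.ofReal (φ p) - T.cylInf (fun q => ENNReal.ofReal (φ q)) k p ≤
      ENNReal.ofReal (D * (k : ℝ) ^ (-θ)) * ENNReal.ofReal (φ p) := by
  filter_upwards [T.ae_tower_symb_ne_zero] with p hp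
  have hk0 : (0 : ℝ) < k := by exact_mod_cast hk
  set e := D * (k : ℝ) ^ (-θ) with he
  have he0 : 0 < e := by positivity
  have h1 : ∀ q, T.code k q = T.code k p →
      ENNReal.ofReal (φ p) ≤ ENNReal.ofReal (1 + e) * ENNReal.ofReal (φ q) := by
    intro q hq
    have hs := T.le_sepTower_of_code_eq hk hp hq
    obtain ⟨hl, hst⟩ := (T.le_sepTower_iff hk).1 hs
    obtain ⟨i, hi, hpi, hqi⟩ := T.le_sepTime_iff.1 hst 0 (by omega)
    have hpp : p ∈ T.pieceSet p.1.2 i := ⟨rfl, hpi⟩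
    have hqp : q ∈ T.pieceSet p.1.2 i := ⟨hl.symm, hqi⟩
    rcases hφ.2 p.1.2 i hi with h0 | ⟨hpos, hrat⟩
    · rw [h0 p hpp, ENNReal.ofReal_zero]
      exact zero_le
    · rw [← ENNReal.ofReal_mul (by linarith)]
      refine ENNReal.ofReal_le_ofReal ?_
      have h2 := (le_abs_self _).trans (hrat p hpp q hqp)
      have h3 : D * gpow θ (T.sepTower p q) ≤ e :=
        mul_le_mul_of_nonneg_left (gpow_le hθ hk hs) hD.le
      rw [← div_le_iff₀ (hpos q hqp)]
      linarith
  have hne : ENNReal.ofReal (1 + e) ≠ 0 := by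
    rw [Ne, ENNReal.ofReal_eq_zero]
    linarith
  have h2 : ENNReal.ofReal (φ p) ≤
      ENNReal.ofReal (1 + e) * T.cylInf (fun q => ENNReal.ofReal (φ q)) k p := by
    obtain ⟨k, rfl⟩ : ∃ k', k = k' + 1 := ⟨k - 1, by omega⟩
    rw [mul_comm, ← ENNReal.div_le_iff hne ENNReal.ofReal_ne_top]
    refine le_iInf₂ fun q hq => ?_
    rw [ENNReal.div_le_iff hne ENNReal.ofReal_ne_top, mul_comm]
    exact h1 q hq
  rw [tsub_le_iff_right]
  refine h2.trans ?_
  rw [ENNReal.ofReal_add zero_le_one he0.le, ENNReal.ofReal_one, add_mul, one_mul, add_comm]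
  gcongr
  exact cylInf_le k p

variable (T)

/-- The densities in `𝒢_θ⁺` of probability measures are bounded. -/
theorem exists_density_bound [IsFiniteMeasure T.towerMeasure] (θ : ℝ) (hθ : 0 < θ) {D : ℝ}
    (hD : 0 < D) :
    ∃ b : ℝ, 0 < b ∧ ∀ φ : T.Tower → ℝ, T.MemGPlus θ D φ →
      T.towerMeasure.withDensity (fun p => ENNReal.ofReal (φ p)) Set.univ = 1 →
      ∀ p, φ p ≤ b := by
  set M := T.towerMeasure.real Set.univ with hM
  have hMpos : 0 < M := by
    refine ENNReal.toReal_pos (fun h0 => ?_) (measure_ne_top _ _)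
    have := T.map_base_le Set.univ
    rw [h0, Measure.map_apply T.measurable_base MeasurableSet.univ, Set.preimage_univ] at this
    exact T.m₀_univ_ne_zero (nonpos_iff_eq_zero.1 this)
  refine ⟨2 / M + D, by positivity, fun φ hφ h1 p => ?_⟩
  have h2 : ∃ q, φ q ≤ 2 / M := by
    by_contra! h
    rw [withDensity_apply _ MeasurableSet.univ, Measure.restrict_univ] at h1
    have h3 : ENNReal.ofReal (2 / M) * T.towerMeasure Set.univ ≤ 1 := by
      rw [← h1, ← lintegral_const]
      exact lintegral_mono fun q => ENNReal.ofReal_le_ofReal (h q).le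
    rw [← ENNReal.ofReal_toReal (measure_ne_top T.towerMeasure Set.univ),
      ← ENNReal.ofReal_mul (by positivity), ENNReal.ofReal_le_one] at h3
    change 2 / M * M ≤ 1 at h3
    rw [div_mul_cancel₀ _ hMpos.ne'] at h3
    linarith
  obtain ⟨q, hq⟩ := h2
  have h3 := (le_abs_self _).trans (hφ.1 p q)
  have h4 : gpow θ (T.sepTower p q) ≤ 1 := by
    unfold gpow
    split_ifs
    · exact zero_le_one
    · rw [one_div]
      exact inv_le_one_of_one_le₀ (Real.one_le_rpow (le_max_right _ _) hθ.le)
  nlinarith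

end YoungTower

namespace YoungTower

variable {Δ₀ : Type*} [MeasurableSpace Δ₀] (T : YoungTower Δ₀)

theorem withDensity_le_smul {m : Measure T.Tower} {g : T.Tower → ℝ≥0∞} {c : ℝ≥0∞}
    (h : ∀ᵐ p ∂m, g p ≤ c) : m.withDensity g ≤ c • m := by
  rw [← withDensity_const]
  exact withDensity_mono h

theorem two_rpow_mul_le {k : ℕ} (hk : 1 ≤ k) {θ : ℝ} (hθ : 0 < θ) :
    (k : ℝ) ^ (-θ) ≤ 2 ^ θ * ((k + 1 : ℕ) : ℝ) ^ (-θ) := by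
  have hk1 : (1 : ℝ) ≤ k := by exact_mod_cast hk
  have h1 : (2 * k : ℝ) ^ (-θ) ≤ ((k + 1 : ℕ) : ℝ) ^ (-θ) :=
    Real.rpow_le_rpow_of_nonpos (by positivity) (by push_cast; linarith) (by linarith)
  rw [Real.mul_rpow (by norm_num) (by positivity)] at h1
  calc (k : ℝ) ^ (-θ) = 2 ^ θ * (2 ^ (-θ) * (k : ℝ) ^ (-θ)) := by
        rw [← mul_assoc, ← Real.rpow_add (by norm_num), add_neg_cancel, Real.rpow_zero, one_mul]
    _ ≤ _ := by gcongr

theorem div_rpow_le {n k : ℕ} (hk : k + 1 ≤ n) {γ : ℝ} (hγ : 0 < γ) :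
    ((n / (k + 1) : ℕ) : ℝ) ^ (-γ) ≤ 2 ^ γ * ((k + 1 : ℕ) : ℝ) ^ γ * (n : ℝ) ^ (-γ) := by
  set h := n / (k + 1) with hh
  have hh1 : 1 ≤ h := (Nat.one_le_div_iff (by omega)).2 hk
  have h1 : n ≤ 2 * (k + 1) * h := by
    have h2 : n < (k + 1) * (h + 1) := Nat.lt_mul_div_succ n (by omega)
    nlinarith
  have hn : (0 : ℝ) < n := by exact_mod_cast (by omega : 0 < n)
  have h3 : (n : ℝ) ≤ 2 * ((k + 1 : ℕ) : ℝ) * h := by exact_mod_cast h1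
  have h4 := Real.rpow_le_rpow_of_nonpos hn h3 (by linarith : -γ ≤ 0)
  rw [Real.mul_rpow (by positivity) (by positivity)] at h4
  have h5 : 0 < (2 * ((k + 1 : ℕ) : ℝ)) := by positivity
  calc (h : ℝ) ^ (-γ)
      = (2 * ((k + 1 : ℕ) : ℝ)) ^ γ * ((2 * ((k + 1 : ℕ) : ℝ)) ^ (-γ) * (h : ℝ) ^ (-γ)) := by
        rw [← mul_assoc, ← Real.rpow_add h5, add_neg_cancel, Real.rpow_zero, one_mul]
    _ ≤ (2 * ((k + 1 : ℕ) : ℝ)) ^ γ * (n : ℝ) ^ (-γ) := by gcongr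
    _ = _ := by rw [Real.mul_rpow (by norm_num) (by positivity)]

/-- A measure with density in `𝒢_θ⁺` becomes tame, up to a remainder of polynomially small mass. -/
theorem exists_decomp_density [IsFiniteMeasure T.towerMeasure] {γ θ Cτ D : ℝ} (hγ : 0 < γ)
    (hθ : γ + 2 < θ) (hC : 0 ≤ Cτ) (hD : 0 < D)
    (htail : ∀ h : ℕ, 1 ≤ h → T.tail h ≤ ENNReal.ofReal (Cτ * (h : ℝ) ^ (-γ))) :
    ∃ S : ℝ, 0 < S ∧ ∀ φ : T.Tower → ℝ, T.MemGPlus θ D φ →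
      T.towerMeasure.withDensity (fun p => ENNReal.ofReal (φ p)) Set.univ = 1 →
      ∀ n : ℕ, 1 ≤ n → ∃ α r,
        T.push n (T.towerMeasure.withDensity fun p => ENNReal.ofReal (φ p)) = α + r ∧
        T.Tame α ∧ r Set.univ ≤ ENNReal.ofReal (S * (n : ℝ) ^ (-γ)) := by
  have hθ0 : 0 < θ := by linarith
  obtain ⟨b, hb, hbound⟩ := T.exists_density_bound θ hθ0 hD
  set b₁ := b * (1 + D) * 2 ^ θ with hb₁
  have hb₁0 : 0 < b₁ := by positivity
  set M := T.towerMeasure.real Set.univ with hM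
  have hM0 : 0 ≤ M := measureReal_nonneg
  set X := T.bound.toReal * Cτ * 2 ^ γ * (b₁ * M) with hX
  have hX0 : 0 ≤ X := by
    have : 0 ≤ T.bound.toReal := ENNReal.toReal_nonneg
    positivity
  have hsum : Summable fun k : ℕ => ((k + 1 : ℕ) : ℝ) ^ (1 + γ - θ) :=
    (summable_nat_add_iff 1).2 (Real.summable_nat_rpow.2 (by linarith))
  set Z := ∑' k : ℕ, ((k + 1 : ℕ) : ℝ) ^ (1 + γ - θ) with hZ
  have hZ0 : 0 ≤ Z := tsum_nonneg fun k => by positivity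
  refine ⟨X * Z + D, by positivity, fun φ hφ h1 n hn => ?_⟩
  set f : T.Tower → ℝ≥0∞ := fun p => ENNReal.ofReal (φ p) with hf
  have hfb : ∀ p, f p ≤ ENNReal.ofReal b := fun p => ENNReal.ofReal_le_ofReal (hbound φ hφ h1 p)
  have hn0 : (0 : ℝ) < n := by exact_mod_cast hn
  set g : ℕ → T.Tower → ℝ≥0∞ := fun k p => T.cylInf f (k + 1) p - T.cylInf f k p with hg
  have hgb : ∀ k, ∀ᵐ p ∂T.towerMeasure,
      g k p ≤ ENNReal.ofReal (b₁ * ((k + 1 : ℕ) : ℝ) ^ (-θ)) := by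
    intro k
    rcases Nat.eq_zero_or_pos k with rfl | hk
    · refine Filter.Eventually.of_forall fun p => ?_
      refine (tsub_le_self.trans (cylInf_le 1 p)).trans ((hfb p).trans ?_)
      refine ENNReal.ofReal_le_ofReal ?_
      have h2 : (1 : ℝ) ≤ 2 ^ θ := Real.one_le_rpow (by norm_num) hθ0.le
      have h3 : (1 : ℝ) ≤ (1 + D) * 2 ^ θ := by nlinarith
      rw [zero_add, Nat.cast_one, Real.one_rpow, mul_one, hb₁, mul_assoc]
      exact le_mul_of_one_le_right hb.le h3
    · filter_upwards [hφ.sub_cylInf_le hθ0 hD hk] with p hp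
      refine (tsub_le_tsub_right (cylInf_le (k + 1) p) _).trans (hp.trans ?_)
      refine (mul_le_mul_right (hfb p) _).trans ?_
      rw [← ENNReal.ofReal_mul (by positivity)]
      refine ENNReal.ofReal_le_ofReal ?_
      calc D * (k : ℝ) ^ (-θ) * b ≤ (1 + D) * (2 ^ θ * ((k + 1 : ℕ) : ℝ) ^ (-θ)) * b := by
            gcongr
            · linarith
            · exact two_rpow_mul_le hk hθ0
        _ = _ := by rw [hb₁]; ring
  have hpiece : ∀ k, k + 1 ≤ n → ∃ α r, T.push n (T.towerMeasure.withDensity (g k)) = α + r ∧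
      T.Tame α ∧
      r Set.univ ≤ ENNReal.ofReal (X * ((k + 1 : ℕ) : ℝ) ^ (1 + γ - θ) * (n : ℝ) ^ (-γ)) := by
    intro k hk
    have hreg : T.TReg T.K₁ (k + 1) (T.towerMeasure.withDensity (g k)) :=
      treg_withDensity T.K₁_nonneg fun p q hpq => by
        simp only [hg, (cylInf_eq hpq).1, (cylInf_eq hpq).2]
    obtain ⟨α, r, h2, h3, h4⟩ := hreg.exists_decomp
      (T.tame_towerMeasure.smul (ENNReal.ofReal (b₁ * ((k + 1 : ℕ) : ℝ) ^ (-θ))))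
      (T.withDensity_le_smul (hgb k)) (n / (k + 1))
    have hle : (k + 1) * (n / (k + 1)) ≤ n := Nat.mul_div_le n (k + 1)
    refine ⟨T.push (n - (k + 1) * (n / (k + 1))) α, T.push (n - (k + 1) * (n / (k + 1))) r,
      ?_, h3.push _, ?_⟩
    · rw [← T.push_add, ← h2, T.push_push, Nat.sub_add_cancel hle]
    · rw [T.push_univ]
      refine h4.trans ?_
      have hh := (Nat.one_le_div_iff (by omega : 0 < k + 1)).2 hk
      rw [Measure.smul_apply, smul_eq_mul, ← ENNReal.ofReal_toReal (measure_ne_top T.towerMeasure _),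
        ← ENNReal.ofReal_mul (by positivity), ← ENNReal.ofReal_toReal T.bound_ne_top,
        ← ENNReal.ofReal_natCast]
      calc ENNReal.ofReal ((k + 1 : ℕ) : ℝ) *
            (ENNReal.ofReal T.bound.toReal * T.tail (n / (k + 1))) *
            ENNReal.ofReal (b₁ * ((k + 1 : ℕ) : ℝ) ^ (-θ) * M)
          ≤ ENNReal.ofReal ((k + 1 : ℕ) : ℝ) * (ENNReal.ofReal T.bound.toReal *
            ENNReal.ofReal (Cτ * (2 ^ γ * ((k + 1 : ℕ) : ℝ) ^ γ * (n : ℝ) ^ (-γ)))) *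
            ENNReal.ofReal (b₁ * ((k + 1 : ℕ) : ℝ) ^ (-θ) * M) := by
            gcongr
            refine (htail _ hh).trans (ENNReal.ofReal_le_ofReal ?_)
            gcongr
            exact div_rpow_le hk hγ
        _ = ENNReal.ofReal (((k + 1 : ℕ) : ℝ) * (T.bound.toReal *
              (Cτ * (2 ^ γ * ((k + 1 : ℕ) : ℝ) ^ γ * (n : ℝ) ^ (-γ)))) *
              (b₁ * ((k + 1 : ℕ) : ℝ) ^ (-θ) * M)) := by
            rw [← ENNReal.ofReal_mul ENNReal.toReal_nonneg, ← ENNReal.ofReal_mul (by positivity),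
              ← ENNReal.ofReal_mul (by positivity)]
        _ = _ := by
            congr 1
            have h5 : ((k + 1 : ℕ) : ℝ) ^ (1 + γ - θ) =
                ((k + 1 : ℕ) : ℝ) * ((k + 1 : ℕ) : ℝ) ^ γ * ((k + 1 : ℕ) : ℝ) ^ (-θ) := by
              rw [sub_eq_add_neg, Real.rpow_add (by positivity), Real.rpow_add (by positivity),
                Real.rpow_one]
            rw [h5, hX]
            ring
  have hpart : ∀ L, L ≤ n → ∃ α r,
      T.push n (T.towerMeasure.withDensity (T.cylInf f L)) = α + r ∧ T.Tame α ∧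
      r Set.univ ≤ ENNReal.ofReal
        (X * (∑ k ∈ Finset.range L, ((k + 1 : ℕ) : ℝ) ^ (1 + γ - θ)) * (n : ℝ) ^ (-γ)) := by
    intro L
    induction L with
    | zero =>
      intro _
      refine ⟨0, 0, ?_, T.tame_zero, by simp⟩
      rw [show T.cylInf f 0 = 0 from rfl, withDensity_zero, T.push_zero_measure, add_zero]
    | succ L ih =>
      intro hL
      obtain ⟨α, r, h2, h3, h4⟩ := ih (by omega)
      obtain ⟨α', r', h2', h3', h4'⟩ := hpiece L hL
      refine ⟨α + α', r + r', ?_, h3.add h3', ?_⟩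
      · have h5 : T.cylInf f (L + 1) = T.cylInf f L + g L := by
          funext p
          exact (add_tsub_cancel_of_le (cylInf_le_succ L p)).symm
        rw [h5, withDensity_add_left (measurable_cylInf L), T.push_add, h2, h2']
        abel
      · rw [Measure.add_apply, Finset.sum_range_succ, mul_add, add_mul,
          ENNReal.ofReal_add (by positivity) (by positivity)]
        exact add_le_add h4 h4'
  obtain ⟨α, r, h2, h3, h4⟩ := hpart n le_rfl
  have hrest : T.towerMeasure.withDensity (fun p => f p - T.cylInf f n p) Set.univ ≤
      ENNReal.ofReal (D * (n : ℝ) ^ (-γ)) := by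
    calc T.towerMeasure.withDensity (fun p => f p - T.cylInf f n p) Set.univ
        ≤ T.towerMeasure.withDensity (ENNReal.ofReal (D * (n : ℝ) ^ (-θ)) • f) Set.univ :=
          withDensity_mono (hφ.sub_cylInf_le hθ0 hD hn) Set.univ
      _ = ENNReal.ofReal (D * (n : ℝ) ^ (-θ)) := by
          rw [withDensity_smul' _ _ ENNReal.ofReal_ne_top, Measure.smul_apply, smul_eq_mul, h1,
            mul_one]
      _ ≤ _ := by
          refine ENNReal.ofReal_le_ofReal ?_
          gcongr
          · exact_mod_cast hn
          · linarith
  refine ⟨α, r + T.push n (T.towerMeasure.withDensity fun p => f p - T.cylInf f n p), ?_, h3, ?_⟩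
  · have h5 : f = T.cylInf f n + fun p => f p - T.cylInf f n p := by
      funext p
      exact (add_tsub_cancel_of_le (cylInf_le n p)).symm
    rw [← add_assoc, ← h2, ← T.push_add, ← withDensity_add_left (measurable_cylInf n), ← h5]
  · rw [Measure.add_apply, T.push_univ, add_mul,
      ENNReal.ofReal_add (by positivity) (by positivity)]
    refine add_le_add (h4.trans (ENNReal.ofReal_le_ofReal ?_)) hrest
    gcongr
    exact hsum.sum_le_tsum _ fun k _ => by positivity

/-- Convergence of a measure given by a decomposition into a tame part and a small remainder. -/
theorem abs_push_sub_le {ν : Measure T.Tower} [IsProbabilityMeasure ν] {K γ : ℝ}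
    (hK : ∀ μ, T.Tame μ → μ Set.univ ≠ ∞ → ∀ n : ℕ, 1 ≤ n → ∀ A, MeasurableSet A →
        |(T.push n μ).real A - μ.real Set.univ * ν.real A| ≤
          μ.real Set.univ * (K * (n : ℝ) ^ (-γ)))
    {μ α r : Measure T.Tower} [IsFiniteMeasure μ] {a n : ℕ} (hdec : T.push a μ = α + r)
    (hα : T.Tame α) (hn : 1 ≤ n) (hK0 : 0 ≤ K) {A : Set T.Tower} (hA : MeasurableSet A) :
    |(T.push (n + a) μ).real A - μ.real Set.univ * ν.real A| ≤
      μ.real Set.univ * (K * (n : ℝ) ^ (-γ)) + r.real Set.univ := by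
  have hα' : IsFiniteMeasure α := isFiniteMeasure_of_le (T.push a μ) (by
    rw [hdec]
    exact Measure.le_add_right le_rfl)
  have hr' : IsFiniteMeasure r := isFiniteMeasure_of_le (T.push a μ) (by
    rw [hdec]
    exact Measure.le_add_left le_rfl)
  have h1 : μ.real Set.univ = α.real Set.univ + r.real Set.univ := by
    rw [measureReal_def, ← T.push_univ a μ, hdec, ← measureReal_def, measureReal_add_apply]
  have h2 : (T.push (n + a) μ).real A = (T.push n α).real A + (T.push n r).real A := by
    rw [← T.push_push, hdec, T.push_add, measureReal_add_apply]
  have h3 := hK α hα (measure_ne_top _ _) n hn A hA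
  have h4 : (T.push n r).real A ≤ r.real Set.univ := by
    rw [measureReal_def r, ← T.push_univ n r]
    exact measureReal_mono (Set.subset_univ A)
  have h5 : 0 ≤ (T.push n r).real A := measureReal_nonneg
  have h6 : 0 ≤ ν.real A := measureReal_nonneg
  have h7 : ν.real A ≤ 1 := measureReal_le_one
  have h8 : 0 ≤ r.real Set.univ := measureReal_nonneg
  have h9 : 0 ≤ K * (n : ℝ) ^ (-γ) := by positivity
  rw [abs_le] at h3 ⊢
  rw [h1, h2]
  constructor <;> nlinarith

end YoungTower

namespace YoungTower

variable {Δ₀ : Type*} [MeasurableSpace Δ₀] (T : YoungTower Δ₀)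

/-- The restriction of the reference measure to `s` converges to a multiple of `ν` under the tower
map. -/
def Mixes (ν : Measure T.Tower) (s : Set T.Tower) : Prop :=
  ∀ E, MeasurableSet E → Filter.Tendsto
    (fun n => T.towerMeasure.real (T.towerMap^[n] ⁻¹' E ∩ s)) Filter.atTop
    (nhds (T.towerMeasure.real s * ν.real E))

theorem push_restrict_real (n : ℕ) (s : Set T.Tower) {E : Set T.Tower} (hE : MeasurableSet E) :
    (T.push n (T.towerMeasure.restrict s)).real E =
      T.towerMeasure.real (T.towerMap^[n] ⁻¹' E ∩ s) := by
  rw [measureReal_def, T.push_apply n _ hE, Measure.restrict_apply (T.measurable_iterate n hE)]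
  rfl

variable {T} {ν : Measure T.Tower}

theorem Mixes.congr {s t : Set T.Tower} (h : T.Mixes ν s) (hst : s =ᵐ[T.towerMeasure] t) :
    T.Mixes ν t := by
  intro E hE
  have h1 := h E hE
  rw [measureReal_congr hst] at h1
  refine h1.congr fun n => measureReal_congr ?_
  exact (Filter.EventuallyEq.refl _ _).inter hst

theorem Mixes.sdiff [IsFiniteMeasure T.towerMeasure] {s t : Set T.Tower} (h : T.Mixes ν s)
    (h' : T.Mixes ν t) (hts : t ⊆ s) (ht : MeasurableSet t) : T.Mixes ν (s \ t) := by
  intro E hE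
  have h1 := (h E hE).sub (h' E hE)
  rw [← sub_mul, ← measureReal_sdiff hts ht] at h1
  refine h1.congr fun n => ?_
  rw [← measureReal_sdiff (Set.inter_subset_inter_right _ hts)
    ((T.measurable_iterate n hE).inter ht)]
  congr 1
  ext p
  simp only [Set.mem_sdiff, Set.mem_inter_iff]
  tauto

theorem Mixes.iUnion [IsFiniteMeasure T.towerMeasure] {s : ℕ → Set T.Tower}
    (h : ∀ i, T.Mixes ν (s i)) (hd : Pairwise (Function.onFun Disjoint s))
    (hs : ∀ i, MeasurableSet (s i)) : T.Mixes ν (⋃ i, s i) := by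
  intro E hE
  have hsum : ∀ f : ℕ → Set T.Tower, Pairwise (Function.onFun Disjoint f) →
      (∀ i, MeasurableSet (f i)) →
      Summable (fun i => T.towerMeasure.real (f i)) ∧
      T.towerMeasure.real (⋃ i, f i) = ∑' i, T.towerMeasure.real (f i) := fun f hfd hf => by
    constructor
    · exact ENNReal.summable_toReal (by
        rw [← measure_iUnion hfd hf]
        exact measure_ne_top _ _)
    · rw [measureReal_def, measure_iUnion hfd hf, ENNReal.tsum_toReal_eq]
      · rfl
      · exact fun i => measure_ne_top _ _
  have h1 := tendsto_tsum_of_dominated_convergence (𝓕 := Filter.atTop)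
    (f := fun n i => T.towerMeasure.real (T.towerMap^[n] ⁻¹' E ∩ s i)) (hsum s hd hs).1
    (fun i => h i E hE) (Filter.Eventually.of_forall fun n i => by
      rw [Real.norm_of_nonneg measureReal_nonneg]
      exact measureReal_mono Set.inter_subset_right)
  rw [tsum_mul_right, ← (hsum s hd hs).2] at h1
  refine h1.congr fun n => ?_
  rw [Set.inter_iUnion, (hsum (fun i => T.towerMap^[n] ⁻¹' E ∩ s i) ?_ ?_).2]
  · exact fun i j hij => (hd hij).mono Set.inter_subset_right Set.inter_subset_right
  · exact fun i => (T.measurable_iterate n hE).inter (hs i)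

theorem measurableSet_floor {A : Set Δ₀} (hA : MeasurableSet A) (l : ℕ) :
    MeasurableSet {p : T.Tower | p.1.2 = l ∧ p.1.1 ∈ A} :=
  (measurableSet_eq_fun T.measurable_level measurable_const).inter (T.measurable_point hA)

/-- The convergence of tame measures to `ν` at a polynomial rate. -/
def Attracts (T : YoungTower Δ₀) (ν : Measure T.Tower) (γ K : ℝ) : Prop :=
  ∀ μ, T.Tame μ → μ Set.univ ≠ ∞ → ∀ n : ℕ, 1 ≤ n → ∀ A, MeasurableSet A →
    |(T.push n μ).real A - μ.real Set.univ * ν.real A| ≤ μ.real Set.univ * (K * (n : ℝ) ^ (-γ))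

/-- Every integrable density converges to a multiple of `ν` under the tower map. -/
theorem tendsto_setIntegral [IsProbabilityMeasure ν] (hmix : ∀ s, MeasurableSet s → T.Mixes ν s) {f : T.Tower → ℝ}
    (hf : Integrable f T.towerMeasure) {E : Set T.Tower} (hE : MeasurableSet E) :
    Filter.Tendsto (fun n => ∫ p in T.towerMap^[n] ⁻¹' E, f p ∂T.towerMeasure) Filter.atTop
      (nhds (ν.real E * ∫ p, f p ∂T.towerMeasure)) := by
  refine Integrable.induction (fun f : T.Tower → ℝ => Filter.Tendsto
    (fun n => ∫ p in T.towerMap^[n] ⁻¹' E, f p ∂T.towerMeasure) Filter.atTop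
      (nhds (ν.real E * ∫ p, f p ∂T.towerMeasure))) ?_ ?_ ?_ ?_ hf
  · intro c s hs _
    have h1 := (hmix s hs E hE).mul_const c
    rw [integral_indicator_const c hs, smul_eq_mul]
    refine Filter.Tendsto.congr (fun n => ?_) (h1.trans_eq ?_)
    · rw [integral_indicator_const c hs, smul_eq_mul, measureReal_restrict_apply hs, Set.inter_comm]
    · congr 1
      ring
  · intro f g _ hf hg h1 h2
    refine Filter.Tendsto.congr (fun n => ?_) ((h1.add h2).trans_eq ?_)
    · exact (integral_add hf.integrableOn hg.integrableOn).symm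
    · rw [← mul_add, ← integral_add hf hg]
      rfl
  · refine isClosed_of_closure_subset fun f hf => ?_
    rw [Metric.mem_closure_iff] at hf
    change Filter.Tendsto _ _ _
    rw [Metric.tendsto_atTop]
    intro ε hε
    obtain ⟨g, hg, hfg⟩ := hf (ε / 3) (by positivity)
    obtain ⟨n₀, hn₀⟩ := Metric.tendsto_atTop.1 hg (ε / 3) (by positivity)
    have hfi := L1.integrable_coeFn f
    have hgi := L1.integrable_coeFn g
    have hdist : ∀ B, |(∫ p in B, f p ∂T.towerMeasure) - ∫ p in B, g p ∂T.towerMeasure| <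
        ε / 3 := by
      intro B
      rw [← integral_sub hfi.integrableOn hgi.integrableOn]
      rw [← Real.norm_eq_abs]
      refine lt_of_le_of_lt (norm_integral_le_integral_norm _) (lt_of_le_of_lt ?_ hfg)
      rw [L1.dist_eq_integral_dist]
      exact setIntegral_le_integral (hfi.sub hgi).norm
        (Filter.Eventually.of_forall fun p => norm_nonneg _)
    refine ⟨n₀, fun n hn => ?_⟩
    have h1 := hn₀ n hn
    have h2 := hdist (T.towerMap^[n] ⁻¹' E)
    have h3 := hdist Set.univ
    rw [setIntegral_univ, setIntegral_univ] at h3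
    have h4 : 0 ≤ ν.real E := measureReal_nonneg
    have h5 : ν.real E ≤ 1 := measureReal_le_one
    rw [Real.dist_eq, abs_lt] at h1 ⊢
    rw [abs_lt] at h2 h3
    constructor <;> nlinarith
  · intro f g hfg _ h1
    rw [← integral_congr_ae hfg]
    refine h1.congr fun n => integral_congr_ae (ae_restrict_of_ae hfg)

variable [IsFiniteMeasure T.towerMeasure] [IsProbabilityMeasure ν] {γ K : ℝ}

theorem mixes_of_cylinder (hγ : 0 < γ) (hK0 : 0 ≤ K)
    (ht0 : Filter.Tendsto T.tail Filter.atTop (nhds 0)) (hK : T.Attracts ν γ K) {j : ℕ}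
    {s : Set T.Tower} (hsm : MeasurableSet s)
    (hs : ∀ p q, ((j + 1 : ℕ) : ℕ∞) ≤ T.sepTower p q → (p ∈ s ↔ q ∈ s)) : T.Mixes ν s := by
  intro E hE
  have hreg : T.TReg T.K₁ (j + 1) (T.towerMeasure.restrict s) := by
    classical
    rw [← withDensity_indicator_one hsm]
    refine treg_withDensity T.K₁_nonneg fun p q hpq => ?_
    by_cases hp : p ∈ s
    · rw [Set.indicator_of_mem hp, Set.indicator_of_mem ((hs p q hpq).1 hp)]
      rfl
    · rw [Set.indicator_of_notMem hp, Set.indicator_of_notMem fun h => hp ((hs p q hpq).2 h)]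
  set M := T.towerMeasure.real s with hM
  have hrate : Filter.Tendsto (fun h : ℕ => M * (K * (h : ℝ) ^ (-γ))) Filter.atTop (nhds 0) := by
    have := (((tendsto_rpow_neg_atTop hγ).comp tendsto_natCast_atTop_atTop).const_mul K).const_mul M
    simpa using this
  have hsmall : Filter.Tendsto (fun h => (((j + 1 : ℕ) : ℝ≥0∞) * (T.bound * T.tail h) *
      T.towerMeasure Set.univ).toReal) Filter.atTop (nhds 0) := by
    have h1 := ENNReal.Tendsto.const_mul (a := T.bound) ht0 (Or.inr T.bound_ne_top)
    have h2 := ENNReal.Tendsto.const_mul (a := ((j + 1 : ℕ) : ℝ≥0∞)) h1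
      (Or.inr (ENNReal.natCast_ne_top _))
    have h3 := ENNReal.Tendsto.mul_const (b := T.towerMeasure Set.univ) h2
      (Or.inr (measure_ne_top _ _))
    rw [mul_zero, mul_zero, zero_mul] at h3
    exact (ENNReal.tendsto_toReal ENNReal.zero_ne_top).comp h3
  rw [Metric.tendsto_atTop]
  intro ε hε
  obtain ⟨h, hh, hfin⟩ := ((hsmall.eventually (gt_mem_nhds (half_pos hε))).and
    (ht0.eventually (gt_mem_nhds ENNReal.zero_lt_top))).exists
  obtain ⟨n₀, hn₀⟩ := Filter.eventually_atTop.1 (hrate.eventually (gt_mem_nhds (half_pos hε)))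
  obtain ⟨α, r, h1, h2, h3⟩ := hreg.exists_decomp T.tame_towerMeasure Measure.restrict_le_self h
  refine ⟨max n₀ 1 + (j + 1) * h, fun n hn => ?_⟩
  obtain ⟨k, rfl⟩ : ∃ k, n = k + (j + 1) * h := ⟨n - (j + 1) * h, by omega⟩
  have hk : max n₀ 1 ≤ k := by omega
  have h4 := T.abs_push_sub_le hK h1 h2 (le_trans (le_max_right _ _) hk) hK0 hE
  rw [T.push_restrict_real _ _ hE, measureReal_restrict_apply_univ] at h4
  have h5 : r.real Set.univ < ε / 2 := by
    refine lt_of_le_of_lt (ENNReal.toReal_mono ?_ h3) hh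
    exact ENNReal.mul_ne_top (ENNReal.mul_ne_top (ENNReal.natCast_ne_top _)
      (ENNReal.mul_ne_top T.bound_ne_top hfin.ne)) (measure_ne_top _ _)
  have h6 := hn₀ k (le_trans (le_max_left _ _) hk)
  rw [Real.dist_eq]
  linarith

theorem mixes_floor (hγ : 0 < γ) (hK0 : 0 ≤ K)
    (ht0 : Filter.Tendsto T.tail Filter.atTop (nhds 0)) (hK : T.Attracts ν γ K) {A : Set Δ₀}
    (hA : MeasurableSet A) (l : ℕ) : T.Mixes ν {p | p.1.2 = l ∧ p.1.1 ∈ A} := by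
  set 𝓟 : Set (Set Δ₀) := {A | MeasurableSet A ∧ ∃ k : ℕ, ∀ x y,
    (k : ℕ∞) ≤ sepTime T.I T.Λ T.FR x y → (x ∈ A ↔ y ∈ A)} with h𝓟
  have hpi : IsPiSystem 𝓟 := by
    rintro A ⟨hA, k, hk⟩ B ⟨hB, k', hk'⟩ -
    refine ⟨hA.inter hB, max k k', fun x y hxy => and_congr (hk x y ?_) (hk' x y ?_)⟩
    · exact le_trans (by exact_mod_cast le_max_left k k') hxy
    · exact le_trans (by exact_mod_cast le_max_right k k') hxy
  have hcyl : ∀ A ∈ 𝓟, ∀ l, T.Mixes ν {p | p.1.2 = l ∧ p.1.1 ∈ A} := by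
    rintro A ⟨hA, k, hk⟩ l
    refine mixes_of_cylinder hγ hK0 ht0 hK (j := k) (measurableSet_floor hA l) fun p q hpq => ?_
    obtain ⟨h1, h2⟩ := (T.le_sepTower_iff (by omega)).1 hpq
    have h3 := hk p.1.1 q.1.1 (le_trans (by exact_mod_cast Nat.le_succ k) h2)
    change p.1.2 = l ∧ p.1.1 ∈ A ↔ q.1.2 = l ∧ q.1.1 ∈ A
    rw [h1, h3]
  have hle : MeasurableSpace.generateFrom 𝓟 ≤ (inferInstance : MeasurableSpace Δ₀) :=
    MeasurableSpace.generateFrom_le fun A hA => hA.1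
  have hgen : ∀ B, MeasurableSet[MeasurableSpace.generateFrom 𝓟] B →
      ∀ l, T.Mixes ν {p | p.1.2 = l ∧ p.1.1 ∈ B} := by
    intro B hB
    refine MeasurableSpace.induction_on_inter (m := MeasurableSpace.generateFrom 𝓟)
      (C := fun B _ => ∀ l, T.Mixes ν {p | p.1.2 = l ∧ p.1.1 ∈ B}) rfl hpi ?_ hcyl ?_ ?_ B hB
    · exact hcyl ∅ ⟨MeasurableSet.empty, 0, fun _ _ _ => Iff.rfl⟩
    · intro t htm ht l
      have h1 := (hcyl Set.univ ⟨MeasurableSet.univ, 0, fun _ _ _ => Iff.rfl⟩ l).sdiff (ht l)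
        (fun p hp => ⟨hp.1, trivial⟩) (measurableSet_floor (hle _ htm) l)
      convert h1 using 1
      ext p
      exact ⟨fun hp => ⟨⟨hp.1, trivial⟩, fun hp' => hp.2 hp'.2⟩,
        fun hp => ⟨hp.1.1, fun hp' => hp.2 ⟨hp.1.1, hp'⟩⟩⟩
    · intro f hfd hfm hf l
      have h1 := Mixes.iUnion (fun i => hf i l)
        (fun i j hij => Set.disjoint_left.2 fun p hp hp' =>
          Set.disjoint_left.1 (hfd hij) hp.2 hp'.2)
        fun i => measurableSet_floor (hle _ (hfm i)) l
      convert h1 using 1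
      ext p
      simp only [Set.mem_iUnion, Set.mem_ofPred_eq, exists_and_left]
  obtain ⟨B, hB, hAB⟩ := T.generating A hA
  have hsub : {S : Set Δ₀ | ∃ k : ℕ, ∃ i ∈ T.I, S = T.FR^[k] ⁻¹' T.Λ i} ⊆ 𝓟 := by
    rintro _ ⟨k, i, hi, rfl⟩
    refine ⟨T.FR_meas.iterate k (T.Λ_meas i hi), k + 1, fun x y hxy => ?_⟩
    obtain ⟨i', hi', hx, hy⟩ := T.le_sepTime_iff.1 hxy k (by omega)
    have key : ∀ z, T.FR^[k] z ∈ T.Λ i' → (T.FR^[k] z ∈ T.Λ i ↔ i = i') := fun z hz =>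
      ⟨fun h => by
        by_contra hne
        exact Set.disjoint_left.1 (T.Λ_disj hi hi' hne) h hz, fun h => h ▸ hz⟩
    exact (key x hx).trans (key y hy).symm
  refine (hgen B (MeasurableSpace.generateFrom_mono hsub B hB) l).congr ?_
  filter_upwards [T.ae_tower_of_ae hAB] with p hp
  have hp' : (p.1.1 ∈ A) = (p.1.1 ∈ B) := hp
  exact propext (and_congr Iff.rfl (Iff.of_eq hp'.symm))

theorem mixes (hγ : 0 < γ) (hK0 : 0 ≤ K)
    (ht0 : Filter.Tendsto T.tail Filter.atTop (nhds 0)) (hK : T.Attracts ν γ K)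
    {s : Set T.Tower} (hs : MeasurableSet s) : T.Mixes ν s := by
  have h1 := Mixes.iUnion (fun l => mixes_floor hγ hK0 ht0 hK (T.measurableSet_slice hs l) l)
    (fun i j hij => Set.disjoint_left.2 fun p hp hp' => hij (hp.1.symm.trans hp'.1))
    fun l => measurableSet_floor (T.measurableSet_slice hs l) l
  convert h1 using 1
  ext p
  simp only [Set.mem_iUnion, Set.mem_ofPred_eq]
  constructor
  · exact fun hp => ⟨p.1.2, rfl, p.2, hp⟩
  · rintro ⟨l, rfl, _, hp⟩
    exact hp

theorem eq_of_isInvariantEquiv (hmix : ∀ s, MeasurableSet s → T.Mixes ν s)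
    {ν' : Measure T.Tower} [IsProbabilityMeasure ν'] (h : T.IsInvariantEquiv ν') : ν' = ν := by
  refine Measure.ext fun E hE => ?_
  have hint : Integrable (fun p => (ν'.rnDeriv T.towerMeasure p).toReal) T.towerMeasure :=
    Measure.integrable_toReal_rnDeriv
  have h1 := tendsto_setIntegral hmix hint hE
  simp_rw [Measure.setIntegral_toReal_rnDeriv h.2.1, Measure.integral_toReal_rnDeriv h.2.1] at h1
  have h2 : ∀ n, ν'.real (T.towerMap^[n] ⁻¹' E) = ν'.real E := fun n => by
    rw [measureReal_def, (h.1.iterate n).measure_preimage hE.nullMeasurableSet]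
    rfl
  simp_rw [h2] at h1
  have h3 := tendsto_nhds_unique h1 tendsto_const_nhds
  rw [probReal_univ, mul_one] at h3
  exact (ENNReal.toReal_eq_toReal_iff' (measure_ne_top _ _) (measure_ne_top _ _)).1 h3.symm

end YoungTower

end

theorem YoungTower.isFiniteMeasure_of_tail {Δ₀ : Type*} [MeasurableSpace Δ₀] (T : YoungTower Δ₀)
    (h : T.tail 1 ≠ ∞) : IsFiniteMeasure T.towerMeasure := by
  constructor
  rw [← T.tail_zero, T.tail_zero_eq]
  exact ENNReal.add_lt_top.2 ⟨measure_lt_top _ _, lt_top_iff_ne_top.2 h⟩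

theorem YoungTower.exists_tvDist_le {Δ₀ : Type*} [MeasurableSpace Δ₀] (T : YoungTower Δ₀)
    [IsFiniteMeasure T.towerMeasure] {ν : Measure T.Tower} [IsProbabilityMeasure ν]
    {γ θ Cτ D K : ℝ} (hγ : 0 < γ) (hθ : γ + 2 < θ) (hC : 0 ≤ Cτ) (hD : 0 < D)
    (htail : ∀ h : ℕ, 1 ≤ h → T.tail h ≤ ENNReal.ofReal (Cτ * (h : ℝ) ^ (-γ)))
    (hK0 : 0 < K) (hK : T.Attracts ν γ K) :
    ∃ C' : ℝ, 0 < C' ∧ ∀ (lam : ProbabilityMeasure T.Tower) (φ : T.Tower → ℝ),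
      (lam : Measure T.Tower) = T.towerMeasure.withDensity (fun p => ENNReal.ofReal (φ p)) →
      T.MemGPlus θ D φ → ∀ n : ℕ, 1 ≤ n →
        tvDist (Measure.map (T.towerMap^[n]) (lam : Measure T.Tower)) ν ≤
          C' * (n : ℝ) ^ (-γ) := by
  obtain ⟨S, hS, hdec⟩ := T.exists_decomp_density hγ hθ hC hD htail
  refine ⟨2 * (K * 2 ^ γ + S * 3 ^ γ + 1), by positivity, fun lam φ hlam hφ n hn => ?_⟩
  have hone : T.towerMeasure.withDensity (fun p => ENNReal.ofReal (φ p)) Set.univ = 1 := by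
    rw [← hlam]
    exact measure_univ
  have hn0 : (0 : ℝ) < n := by exact_mod_cast hn
  rw [mul_assoc]
  refine tvDist_le_of_forall fun A hA => ?_
  change |(T.push n (lam : Measure T.Tower)).real A - ν.real A| ≤ _
  rcases Nat.eq_or_lt_of_le hn with rfl | hn2
  · have h1 : (T.push 1 (lam : Measure T.Tower)).real A ≤ 1 := by
      have : IsProbabilityMeasure (T.push 1 (lam : Measure T.Tower)) :=
        ⟨by rw [T.push_univ]; exact measure_univ⟩
      exact measureReal_le_one
    have h2 : ν.real A ≤ 1 := measureReal_le_one
    have h3 : 0 ≤ (T.push 1 (lam : Measure T.Tower)).real A := measureReal_nonneg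
    have h4 : 0 ≤ ν.real A := measureReal_nonneg
    have h5 : 0 ≤ K * 2 ^ γ + S * 3 ^ γ := by positivity
    rw [Nat.cast_one, Real.one_rpow, mul_one]
    exact (abs_le.2 ⟨by linarith, by linarith⟩ : _ ≤ (1 : ℝ)).trans (by linarith)
  · have ha : 1 ≤ n / 2 := by omega
    have hb : 1 ≤ n - n / 2 := by omega
    obtain ⟨α, r, h1, h2, h3⟩ := hdec φ hφ hone (n / 2) ha
    rw [← hlam] at h1
    have h4 := T.abs_push_sub_le hK h1 h2 hb hK0.le hA
    rw [show n - n / 2 + n / 2 = n by omega, probReal_univ, one_mul, one_mul] at h4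
    have h5 : r.real Set.univ ≤ S * ((n / 2 : ℕ) : ℝ) ^ (-γ) := by
      have := ENNReal.toReal_mono ENNReal.ofReal_ne_top h3
      rwa [ENNReal.toReal_ofReal (by positivity)] at this
    have scale : ∀ (c : ℝ) (k : ℕ), 0 < c → 1 ≤ k → (n : ℝ) ≤ c * k →
        (k : ℝ) ^ (-γ) ≤ c ^ γ * (n : ℝ) ^ (-γ) := by
      intro c k hc hk hnk
      have h6 := Real.rpow_le_rpow_of_nonpos hn0 hnk (by linarith : -γ ≤ 0)
      rw [Real.mul_rpow hc.le (Nat.cast_nonneg k)] at h6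
      calc (k : ℝ) ^ (-γ) = c ^ γ * (c ^ (-γ) * (k : ℝ) ^ (-γ)) := by
            rw [← mul_assoc, ← Real.rpow_add hc, add_neg_cancel, Real.rpow_zero, one_mul]
        _ ≤ _ := by gcongr
    have h6 := scale 2 (n - n / 2) two_pos hb (by exact_mod_cast (by omega : n ≤ 2 * (n - n / 2)))
    have h7 := scale 3 (n / 2) three_pos ha (by exact_mod_cast (by omega : n ≤ 3 * (n / 2)))
    calc |(T.push n (lam : Measure T.Tower)).real A - ν.real A|
        ≤ K * ((n - n / 2 : ℕ) : ℝ) ^ (-γ) + r.real Set.univ := h4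
      _ ≤ K * (2 ^ γ * (n : ℝ) ^ (-γ)) + S * (3 ^ γ * (n : ℝ) ^ (-γ)) := by
          refine add_le_add ?_ (h5.trans ?_) <;> gcongr
      _ = (K * 2 ^ γ + S * 3 ^ γ) * (n : ℝ) ^ (-γ) := by ring
      _ ≤ _ := mul_le_mul_of_nonneg_right (by linarith) (by positivity)

theorem young_tower_polynomial_equilibrium_Gtheta {Δ₀ : Type*} [MeasurableSpace Δ₀]
    (T : YoungTower Δ₀) :
    ∃ θ₀ : ℝ, 1 < θ₀ ∧ ∀ θ : ℝ, θ₀ ≤ θ → ∃ ζ₀ : ℝ, 1 < ζ₀ ∧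
      ∀ ζ : ℝ, 1 < ζ → ζ < ζ₀ → ∀ C : ℝ, 0 < C →
        (∀ n : ℕ, 1 ≤ n → (T.m₀ {x | n < T.R x}).toReal ≤ C / (n : ℝ) ^ ζ) →
        (∃! ν : ProbabilityMeasure T.Tower, T.IsInvariantEquiv (ν : Measure T.Tower)) ∧
        ∀ ν : ProbabilityMeasure T.Tower, T.IsInvariantEquiv (ν : Measure T.Tower) →
          ∀ D : ℝ, 0 < D → ∃ C' : ℝ, 0 < C' ∧
            ∀ (lam : ProbabilityMeasure T.Tower) (φ : T.Tower → ℝ),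
              AEMeasurable φ T.towerMeasure →
              (lam : Measure T.Tower) =
                T.towerMeasure.withDensity (fun p => ENNReal.ofReal (φ p)) →
              T.MemGPlus θ D φ →
              ∀ n : ℕ, 1 ≤ n →
                tvDist (Measure.map (T.towerMap^[n]) (lam : Measure T.Tower))
                  (ν : Measure T.Tower) ≤ C' / (n : ℝ) ^ (ζ - 1) := by
  refine ⟨3, by norm_num, fun θ hθ => ⟨θ - 1, by linarith, fun ζ hζ hζθ C hC htail => ?_⟩⟩
  have hγ : 0 < ζ - 1 := by linarith
  have hCτ : 0 ≤ C * (2 ^ ζ / (ζ - 1)) := by positivity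
  have ht := T.tail_le_of_polynomial hζ hC htail
  have : IsFiniteMeasure T.towerMeasure :=
    T.isFiniteMeasure_of_tail (ne_top_of_le_ne_top ENNReal.ofReal_ne_top (ht 1 le_rfl))
  have ht0 := T.tendsto_tail hγ ht
  obtain ⟨ν, hprob, hinv, K, hK0, hK⟩ := T.exists_equilibrium hγ hCτ ht
  have huniq : ∀ ν' : ProbabilityMeasure T.Tower,
      T.IsInvariantEquiv (ν' : Measure T.Tower) → (ν' : Measure T.Tower) = ν := fun ν' hν' =>
    YoungTower.eq_of_isInvariantEquiv
      (fun s hs => YoungTower.mixes hγ hK0.le ht0 hK hs) hν'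
  refine ⟨⟨⟨ν, hprob⟩, hinv, fun ν' hν' => Subtype.ext (huniq ν' hν')⟩, fun ν' hν' D hD => ?_⟩
  obtain ⟨C', hC', hrate⟩ := T.exists_tvDist_le (ν := ν') (θ := θ) hγ (by linarith) hCτ hD ht hK0
    (by rw [huniq ν' hν']; exact hK)
  refine ⟨C', hC', fun lam φ _ hlam hφ n hn => (hrate lam φ hlam hφ n hn).trans_eq ?_⟩
  rw [Real.rpow_neg (Nat.cast_nonneg n), div_eq_mul_inv]
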